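/- arXiv:2410.05929 — 3 statements merged into one kernel-verified Lean document; each statement's English description precedes it below -/
import Mathlib

section
/- Let φ : ℝ → ℝ be infinitely differentiable with φ(θ + 2π) = φ(θ) + 2π and φ′(θ) > 0 for all θ. Then there exists an infinitely differentiable function K : ℝ × ℝ → ℂ, 2π-periodic in each variable, such that for all θ, σ ∈ ℝ with e^{iθ} ≠ e^{iσ}: K(θ, σ) = (i e^{iσ})/(e^{iσ} − e^{iθ}) − (i φ′(σ) e^{iφ(σ)})/(e^{iφ(σ)} − e^{iφ(θ)}). (That is, the singularities of the two terms along the diagonal cancel exactly, so the integral kernel of T − V_φ T V_φ^{−1} is smooth, where T is the Hilbert transform and V_φ is precomposition with the circle diffeomorphism induced by φ.) -/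
open Set Complex Real

theorem wk_param_nat (n : ℕ) : ∀ {E : Type} [NormedAddCommGroup E] [NormedSpace ℝ E]
    [CompleteSpace E] (f : (ℝ × ℝ) × ℝ → E), ContDiff ℝ (⊤ : ℕ∞) f →
    ContDiff ℝ n (fun x : ℝ × ℝ => ∫ t in (0:ℝ)..1, f (x, t)) := by
  induction n with
  | zero =>
    intro E _ _ _ f hf
    have hc : Continuous (fun x : ℝ × ℝ => ∫ t in (0:ℝ)..1, f (x, t)) :=
      intervalIntegral.continuous_parametric_intervalIntegral_of_continuous'
        (f := fun x t => f (x, t)) hf.continuous 0 1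
    exact contDiff_zero.2 hc
  | succ n ih =>
    intro E _ _ _ f hf
    have hf' : ContDiff ℝ (⊤ : ℕ∞) (fun p : (ℝ × ℝ) × ℝ =>
        (fderiv ℝ f p).comp (ContinuousLinearMap.inl ℝ (ℝ × ℝ) ℝ)) := by
      have : ContDiff ℝ (⊤ : ℕ∞) (fderiv ℝ f) := hf.fderiv_right (by simp)
      exact this.clm_comp contDiff_const
    have hcont := hf.continuous
    have hcont' := hf'.continuous
    push_cast
    rw [contDiff_succ_iff_hasFDerivAt]
    refine ⟨_, ih _ hf', fun x₀ => ?_⟩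
    obtain ⟨C, hC⟩ := ((isCompact_closedBall x₀ 1).prod
      (isCompact_Icc (a := (0:ℝ)) (b := 1))).exists_bound_of_continuousOn hcont'.continuousOn
    refine intervalIntegral.hasFDerivAt_integral_of_dominated_of_fderiv_le
      (s := Metric.closedBall x₀ 1) (bound := fun _ => C)
      (F := fun x t => f (x, t))
      (F' := fun x t => (fderiv ℝ f (x, t)).comp (ContinuousLinearMap.inl ℝ (ℝ × ℝ) ℝ))
      (Metric.closedBall_mem_nhds x₀ one_pos) ?_ ?_ ?_ ?_ ?_ ?_
    · refine Filter.Eventually.of_forall fun x => ?_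
      exact (show Continuous fun t => f (x, t) by fun_prop).aestronglyMeasurable
    · exact (show Continuous fun t => f (x₀, t) by fun_prop).intervalIntegrable _ _
    · exact (hcont'.comp (show Continuous fun t : ℝ => (x₀, t) by fun_prop)).aestronglyMeasurable
    · refine Filter.Eventually.of_forall fun t ht x hx => ?_
      rw [uIoc_of_le zero_le_one] at ht
      exact hC (x, t) ⟨hx, ht.1.le, ht.2⟩
    · exact intervalIntegrable_const
    · refine Filter.Eventually.of_forall fun t ht x hx => ?_
      have h1 : HasFDerivAt f (fderiv ℝ f (x, t)) (x, t) :=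
        (hf.differentiable (by simp) _).hasFDerivAt
      exact h1.comp x (hasFDerivAt_prodMk_left x t)

theorem wk_param (f : (ℝ × ℝ) × ℝ → ℂ) (hf : ContDiff ℝ (⊤ : ℕ∞) f) :
    ContDiff ℝ (⊤ : ℕ∞) (fun x : ℝ × ℝ => ∫ t in (0:ℝ)..1, f (x, t)) :=
  contDiff_infty.2 fun n => wk_param_nat n f hf

theorem wk_hadamard (f : ℝ → ℂ) (hf : ContDiff ℝ (⊤ : ℕ∞) f) (T : ℝ)
    (hT : ∀ x, f (x + T) = f x) :
    ∃ Q R : ℝ × ℝ → ℂ, ContDiff ℝ (⊤ : ℕ∞) Q ∧ ContDiff ℝ (⊤ : ℕ∞) R ∧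
      (∀ θ σ : ℝ, f σ - f θ = ((σ - θ : ℝ) : ℂ) * Q (θ, σ)) ∧
      (∀ θ σ : ℝ, deriv f σ = Q (θ, σ) + ((σ - θ : ℝ) : ℂ) * R (θ, σ)) ∧
      (∀ θ σ : ℝ, Q (θ + T, σ + T) = Q (θ, σ)) ∧
      (∀ θ σ : ℝ, R (θ + T, σ + T) = R (θ, σ)) := by
  have hf1 : ContDiff ℝ (⊤ : ℕ∞) (deriv f) := (contDiff_infty_iff_deriv.1 hf).2
  have hf2 : ContDiff ℝ (⊤ : ℕ∞) (deriv (deriv f)) := (contDiff_infty_iff_deriv.1 hf1).2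
  have hT1 : ∀ x, deriv f (x + T) = deriv f x := fun x => by
    rw [← deriv_comp_add_const, funext hT]
  have hT2 : ∀ x, deriv (deriv f) (x + T) = deriv (deriv f) x := fun x => by
    rw [← deriv_comp_add_const, funext hT1]
  have c1 := hf1.continuous
  have c2 := hf2.continuous
  have hl : ∀ θ σ t : ℝ, HasDerivAt (fun t : ℝ => θ + t * (σ - θ)) (σ - θ) t := fun θ σ t => by
    simpa using ((hasDerivAt_id t).mul_const (σ - θ)).const_add θ
  have ofR : ContDiff ℝ (⊤ : ℕ∞) (fun x : ℝ => (x : ℂ)) := Complex.ofRealCLM.contDiff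
  have hlin : ContDiff ℝ (⊤ : ℕ∞)
      (fun p : (ℝ × ℝ) × ℝ => p.1.1 + p.2 * (p.1.2 - p.1.1)) := by fun_prop
  refine ⟨fun x => ∫ t in (0:ℝ)..1, deriv f (x.1 + t * (x.2 - x.1)),
    fun x => ∫ t in (0:ℝ)..1, (t : ℂ) * deriv (deriv f) (x.1 + t * (x.2 - x.1)),
    wk_param (fun p => deriv f (p.1.1 + p.2 * (p.1.2 - p.1.1))) (hf1.comp hlin),
    wk_param (fun p => (p.2 : ℂ) * deriv (deriv f) (p.1.1 + p.2 * (p.1.2 - p.1.1)))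
      ((ofR.comp contDiff_snd).mul (hf2.comp hlin)), ?_, ?_, ?_, ?_⟩
  · intro θ σ
    have h := intervalIntegral.integral_eq_sub_of_hasDerivAt (a := 0) (b := 1)
      (f := fun t => f (θ + t * (σ - θ)))
      (f' := fun t => ((σ - θ : ℝ) : ℂ) * deriv f (θ + t * (σ - θ)))
      (fun t _ => by
        have := (hf.differentiable (by simp) (θ + t * (σ - θ))).hasDerivAt.scomp t (hl θ σ t)
        simpa [Function.comp_def] using this)
      ((by fun_prop : Continuous _).intervalIntegrable _ _)
    rw [intervalIntegral.integral_const_mul] at h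
    simpa using h.symm
  · intro θ σ
    have h := intervalIntegral.integral_eq_sub_of_hasDerivAt (a := 0) (b := 1)
      (f := fun t : ℝ => (t : ℂ) * deriv f (θ + t * (σ - θ)))
      (f' := fun t => deriv f (θ + t * (σ - θ)) +
        ((σ - θ : ℝ) : ℂ) * ((t : ℂ) * deriv (deriv f) (θ + t * (σ - θ))))
      (fun t _ => by
        have h1 := (hf1.differentiable (by simp) (θ + t * (σ - θ))).hasDerivAt.scomp t (hl θ σ t)
        have h2 := (Complex.ofRealCLM.hasDerivAt (x := t)).mul h1
        convert! h2 using 1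
        simp [Function.comp_def]
        ring)
      ((by fun_prop : Continuous _).intervalIntegrable _ _)
    rw [intervalIntegral.integral_add ((by fun_prop : Continuous _).intervalIntegrable _ _)
      ((by fun_prop : Continuous _).intervalIntegrable _ _),
      intervalIntegral.integral_const_mul] at h
    simpa using h.symm
  · intro θ σ
    refine intervalIntegral.integral_congr fun t _ => ?_
    dsimp only
    rw [← hT1 (θ + t * (σ - θ))]; congr 1; ring
  · intro θ σ
    refine intervalIntegral.integral_congr fun t _ => ?_
    dsimp only
    rw [← hT2 (θ + t * (σ - θ))]; congr 2; ring

theorem wk_div {u v : ℝ × ℝ → ℂ} {p : ℝ × ℝ} (hu : ContDiff ℝ (⊤ : ℕ∞) u)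
    (hv : ContDiff ℝ (⊤ : ℕ∞) v) (h : v p ≠ 0) :
    ContDiffAt ℝ (⊤ : ℕ∞) (fun q => u q / v q) p := by
  simp only [div_eq_mul_inv]
  exact hu.contDiffAt.mul (hv.contDiffAt.inv h)

theorem welding_kernel_is_smooth
    (φ : ℝ → ℝ) (hφ : ContDiff ℝ (⊤ : ℕ∞) φ)
    (hper : ∀ θ, φ (θ + 2 * π) = φ θ + 2 * π)
    (hpos : ∀ θ, 0 < deriv φ θ) :
    ∃ K : ℝ × ℝ → ℂ,
      ContDiff ℝ (⊤ : ℕ∞) K ∧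
      (∀ θ σ : ℝ, K (θ + 2 * π, σ) = K (θ, σ)) ∧
      (∀ θ σ : ℝ, K (θ, σ + 2 * π) = K (θ, σ)) ∧
      (∀ θ σ : ℝ, Complex.exp (θ * Complex.I) ≠ Complex.exp (σ * Complex.I) →
        K (θ, σ) =
          Complex.I * Complex.exp (σ * Complex.I) /
            (Complex.exp (σ * Complex.I) - Complex.exp (θ * Complex.I)) -
          Complex.I * (Complex.ofReal (deriv φ σ)) * Complex.exp ((φ σ : ℂ) * Complex.I) /
            (Complex.exp ((φ σ : ℂ) * Complex.I) - Complex.exp ((φ θ : ℂ) * Complex.I))) := by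
  classical
  have ofR : ContDiff ℝ (⊤ : ℕ∞) (fun x : ℝ => (x : ℂ)) := Complex.ofRealCLM.contDiff
  set e : ℝ → ℂ := fun x => Complex.exp (x * Complex.I) with he
  set g : ℝ → ℂ := fun x => Complex.exp ((φ x : ℂ) * Complex.I) with hg
  have he_smooth : ContDiff ℝ (⊤ : ℕ∞) e := (ofR.mul contDiff_const).cexp
  have hg_smooth : ContDiff ℝ (⊤ : ℕ∞) g := he_smooth.comp hφ
  have he_per : ∀ x, e (x + 2 * π) = e x := fun x => by
    simp only [he]
    rw [Complex.exp_eq_exp_iff_exists_int]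
    exact ⟨1, by push_cast; ring⟩
  have hg_per : ∀ x, g (x + 2 * π) = g x := fun x => by
    have : ∀ y, g y = e (φ y) := fun _ => rfl
    rw [this, this, hper, he_per]
  have hde : ∀ x, HasDerivAt e (Complex.I * e x) x := fun x => by
    have h := ((Complex.ofRealCLM.hasDerivAt (x := x)).mul_const Complex.I).cexp
    convert! h using 1
    simp [he]; ring
  have hdg : ∀ x, HasDerivAt g (Complex.I * (Complex.ofReal (deriv φ x)) * g x) x := fun x => by
    have h := (hde (φ x)).scomp x (hφ.differentiable (by simp) x).hasDerivAt
    convert! h using 1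
    simp [he, hg]; ring
  have heq : ∀ x y : ℝ, e x = e y → ∃ n : ℤ, x = y + n * (2 * π) := fun x y h => by
    obtain ⟨n, hn⟩ := Complex.exp_eq_exp_iff_exists_int.1 h
    refine ⟨n, ?_⟩
    have h3 : ((x : ℂ)) = y + n * (2 * π) := by
      apply mul_right_cancel₀ Complex.I_ne_zero
      rw [hn]; ring
    exact_mod_cast h3
  have hmono : StrictMono φ := strictMono_of_deriv_pos hpos
  have hpern : ∀ (n : ℤ) (x : ℝ), φ (x + n * (2 * π)) = φ x + n * (2 * π) := fun n x => by
    have hp : Function.Periodic (fun x => φ x - x) (2 * π) := fun x => by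
      simp only [hper]; ring
    have := hp.int_mul n x
    linarith
  have he_pern : ∀ (n : ℤ) (x : ℝ), e (x + n * (2 * π)) = e x := fun n x =>
    Function.Periodic.int_mul he_per n x
  have hg_pern : ∀ (n : ℤ) (x : ℝ), g (x + n * (2 * π)) = g x := fun n x =>
    Function.Periodic.int_mul hg_per n x
  have hge : ∀ x y, g x = g y → e x = e y := fun x y h => by
    obtain ⟨n, hn⟩ := heq (φ x) (φ y) h
    rw [← hpern] at hn
    rw [hmono.injective hn, he_pern]
  have he0 : ∀ x, e x ≠ 0 := fun x => Complex.exp_ne_zero _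
  have hg0 : ∀ x, g x ≠ 0 := fun x => Complex.exp_ne_zero _
  obtain ⟨Q, Q', hQ, hQ', hQ1, hQ2, hQ3, hQ4⟩ := wk_hadamard e he_smooth (2 * π) he_per
  obtain ⟨P, P', hP, hP', hP1, hP2, hP3, hP4⟩ := wk_hadamard g hg_smooth (2 * π) hg_per
  set K0 : ℝ × ℝ → ℂ := fun p => Q' p / Q p - P' p / P p with hK0
  set F : ℝ × ℝ → ℂ := fun p => Complex.I * e p.2 / (e p.2 - e p.1) -
    Complex.I * (Complex.ofReal (deriv φ p.2)) * g p.2 / (g p.2 - g p.1) with hF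
  have hFK : ∀ θ σ, e θ ≠ e σ → F (θ, σ) = K0 (θ, σ) := fun θ σ h => by
    have hs : ((σ - θ : ℝ) : ℂ) ≠ 0 := by
      rw [Complex.ofReal_ne_zero, sub_ne_zero]; rintro rfl; exact h rfl
    have hA : e σ - e θ ≠ 0 := sub_ne_zero.2 (Ne.symm h)
    have hB : g σ - g θ ≠ 0 := sub_ne_zero.2 fun h' => h (hge _ _ h').symm
    have a1 := hQ2 θ σ
    have b1 := hP2 θ σ
    rw [(hde σ).deriv] at a1
    rw [(hdg σ).deriv] at b1
    rw [hQ1] at hA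
    rw [hP1] at hB
    have hq := right_ne_zero_of_mul hA
    have hp := right_ne_zero_of_mul hB
    simp only [hF, hK0]
    rw [hQ1, hP1, a1, b1]
    field_simp
    ring
  set K : ℝ × ℝ → ℂ := fun p => if e p.1 = e p.2 then K0 (p.2, p.2) else F p with hK
  have hdφ_per : ∀ x, deriv φ (x + 2 * π) = deriv φ x := fun x => by
    rw [← deriv_comp_add_const, funext hper, deriv_add_const]
  have hKper1 : ∀ θ σ : ℝ, K (θ + 2 * π, σ) = K (θ, σ) := fun θ σ => by
    simp only [hK, hF, he_per, hg_per]
  have hKper2 : ∀ θ σ : ℝ, K (θ, σ + 2 * π) = K (θ, σ) := fun θ σ => by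
    simp only [hK, hF, hK0, he_per, hg_per, hdφ_per, hQ3, hQ4, hP3, hP4]
  refine ⟨K, ?_, hKper1, hKper2, ?_⟩
  · rw [contDiff_iff_contDiffAt]
    rintro ⟨θ₀, σ₀⟩
    by_cases h : e θ₀ = e σ₀
    · obtain ⟨n, hn⟩ := heq _ _ h.symm
      have hdiag : ContDiffAt ℝ (⊤ : ℕ∞) K0 (σ₀, σ₀) := by
        have q0 : Q (σ₀, σ₀) ≠ 0 := by
          have := hQ2 σ₀ σ₀
          rw [(hde σ₀).deriv] at this
          simp only [sub_self, Complex.ofReal_zero, zero_mul, add_zero] at this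
          rw [← this]
          exact mul_ne_zero Complex.I_ne_zero (he0 _)
        have p0 : P (σ₀, σ₀) ≠ 0 := by
          have := hP2 σ₀ σ₀
          rw [(hdg σ₀).deriv] at this
          simp only [sub_self, Complex.ofReal_zero, zero_mul, add_zero] at this
          rw [← this]
          exact mul_ne_zero (mul_ne_zero Complex.I_ne_zero
            (Complex.ofReal_ne_zero.2 (hpos _).ne')) (hg0 _)
        exact (wk_div hQ' hQ q0).sub (wk_div hP' hP p0)
      have hsh : ContDiffAt ℝ (⊤ : ℕ∞)
          (fun p : ℝ × ℝ => K0 (p.1 + n * (2 * π), p.2)) (θ₀, σ₀) := by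
        refine ContDiffAt.comp (g := K0) (f := fun p : ℝ × ℝ => (p.1 + n * (2 * π), p.2))
          (θ₀, σ₀) ?_ (by fun_prop)
        simpa only [← hn] using hdiag
      refine hsh.congr_of_eventuallyEq ?_
      have hopen : IsOpen {p : ℝ × ℝ | |p.2 - (p.1 + n * (2 * π))| < 2 * π} :=
        isOpen_lt (by fun_prop) continuous_const
      have hmem : (θ₀, σ₀) ∈ {p : ℝ × ℝ | |p.2 - (p.1 + n * (2 * π))| < 2 * π} := by
        simp only [mem_ofPred_eq, ← hn, sub_self, abs_zero]
        positivity
      filter_upwards [hopen.mem_nhds hmem] with p hp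
      obtain ⟨θ, σ⟩ := p
      change |σ - (θ + n * (2 * π))| < 2 * π at hp
      by_cases hc : e θ = e σ
      · obtain ⟨m, hm⟩ := heq σ (θ + n * (2 * π)) (by rw [he_pern, hc])
        have hm0 : m = 0 := by
          rw [hm, add_sub_cancel_left, abs_mul, abs_of_pos Real.two_pi_pos] at hp
          have h1 : |(m : ℝ)| < 1 := by
            by_contra hcon
            push Not at hcon
            nlinarith [Real.two_pi_pos]
          have h2 : |m| < 1 := by exact_mod_cast h1
          exact Int.abs_lt_one_iff.1 h2
        rw [hm0] at hm
        simp only [Int.cast_zero, zero_mul, add_zero] at hm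
        simp only [hK, if_pos hc, ← hm]
      · have h3 := hFK (θ + n * (2 * π)) σ (by rwa [he_pern])
        rw [← h3]
        simp only [hK, if_neg hc, hF, he_pern, hg_pern]
    · have hFs : ContDiffAt ℝ (⊤ : ℕ∞) F (θ₀, σ₀) := by
        have hd : ContDiff ℝ (⊤ : ℕ∞) (deriv φ) := (contDiff_infty_iff_deriv.1 hφ).2
        have e1 := he_smooth.comp (contDiff_fst (𝕜 := ℝ) (E := ℝ) (F := ℝ))
        have e2 := he_smooth.comp (contDiff_snd (𝕜 := ℝ) (E := ℝ) (F := ℝ))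
        have g1 := hg_smooth.comp (contDiff_fst (𝕜 := ℝ) (E := ℝ) (F := ℝ))
        have g2 := hg_smooth.comp (contDiff_snd (𝕜 := ℝ) (E := ℝ) (F := ℝ))
        have d2 := (ofR.comp hd).comp (contDiff_snd (𝕜 := ℝ) (E := ℝ) (F := ℝ))
        exact (wk_div (p := (θ₀, σ₀)) (contDiff_const.mul e2) (e2.sub e1)
            (sub_ne_zero.2 (Ne.symm h))).sub
          (wk_div (p := (θ₀, σ₀)) ((contDiff_const.mul d2).mul g2) (g2.sub g1)
            (sub_ne_zero.2 fun h' => h (hge _ _ h').symm))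
      refine hFs.congr_of_eventuallyEq ?_
      have hopen : IsOpen {p : ℝ × ℝ | e p.1 ≠ e p.2} :=
        isOpen_ne_fun (he_smooth.continuous.comp continuous_fst)
          (he_smooth.continuous.comp continuous_snd)
      filter_upwards [hopen.mem_nhds (show (θ₀, σ₀) ∈ {p : ℝ × ℝ | e p.1 ≠ e p.2} from h)] with p hp
      simp only [hK]
      rw [if_neg hp]
  · intro θ σ h
    have h' : ¬ e θ = e σ := h
    exact if_neg h'
end

section
/- With γ_in, γ_out, B_in, B_out and the associated annulus A as in the context, let f : A → ℂ be continuous, complex-differentiable at every point of the interior of A, and such that θ ↦ f(γ_in(θ)) and θ ↦ f(γ_out(θ)) are infinitely differentiable on ℝ. Then there exists an infinitely differentiable function F : ℂ → ℂ (ContDiff ℝ ⊤, viewing ℂ as ℝ²) whose restriction to A equals f. -/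
open Set Complex Real

section Helpers

open Topology Asymptotics Filter

/-- infinite order vanishing -/
def FlatAt {E : Type} [NormedAddCommGroup E] (q : ℂ → E) (z : ℂ) : Prop :=
  ∀ N : ℕ, q =O[𝓝 z] fun w => ‖w - z‖ ^ N

lemma FlatAt.eq_zero {E : Type} [NormedAddCommGroup E] {q : ℂ → E} {z : ℂ} (h : FlatAt q z) :
    q z = 0 := by
  obtain ⟨c, hc⟩ := (h 1).bound
  have := hc.self_of_nhds
  simpa using this

lemma FlatAt.hasFDerivAt {E : Type} [NormedAddCommGroup E] [NormedSpace ℝ E] {q : ℂ → E} {z : ℂ}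
    (h : FlatAt q z) : HasFDerivAt q (0 : ℂ →L[ℝ] E) z := by
  rw [hasFDerivAt_iff_isLittleO]
  have h0 := h.eq_zero
  have : (fun w => ‖w - z‖ ^ 2) =o[𝓝 z] fun w => w - z := by
    have h1 : (fun w : ℂ => ‖w - z‖) =o[𝓝 z] fun w => (1 : ℝ) := by
      rw [isLittleO_one_iff]
      have : Continuous fun w : ℂ => ‖w - z‖ := by fun_prop
      simpa using this.tendsto z
    have h2 : (fun w : ℂ => ‖w - z‖) =O[𝓝 z] fun w => w - z := (isBigO_refl _ _).norm_left
    have := h1.mul_isBigO h2.norm_right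
    simp only [one_mul] at this
    rw [isLittleO_norm_right] at this
    refine this.congr_left ?_
    intro w; ring
  simpa [h0] using (h 2).trans_isLittleO this

lemma FlatAt.fderiv {E : Type} [NormedAddCommGroup E] [NormedSpace ℝ E] {q : ℂ → E} {z : ℂ}
    (hq : ContDiff ℝ (⊤ : ℕ∞) q) (h : FlatAt q z) : FlatAt (fderiv ℝ q) z := by
  intro N
  have hd : ContDiff ℝ 1 (_root_.fderiv ℝ q) := hq.fderiv_right (by norm_cast)
  obtain ⟨K, t, ht, hK⟩ := hd.contDiffAt.exists_lipschitzOnWith (x := z)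
  obtain ⟨C, hC⟩ := (h (2 * N + 2)).bound
  obtain ⟨r, hr, hrt⟩ := Metric.eventually_nhds_iff_ball.1 (hC.and ht)
  have hC0 : 0 ≤ |C| := abs_nonneg C
  refine IsBigO.of_bound (|C| * 2 ^ (2 * N + 2) + |C| + K) ?_
  filter_upwards [Metric.ball_mem_nhds z (show 0 < min (r / 2) 1 by positivity)] with w hw
  rcases eq_or_ne w z with rfl | hwz
  · rw [h.hasFDerivAt.fderiv]; simp; positivity
  rw [Metric.mem_ball, dist_eq_norm, lt_min_iff] at hw
  set d := ‖w - z‖ with hd'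
  have hd0 : 0 < d := norm_pos_iff.2 (sub_ne_zero.2 hwz)
  have hdd : d ^ (N + 1) ≤ d := by
    calc d ^ (N+1) ≤ d ^ 1 := pow_le_pow_of_le_one hd0.le hw.2.le (by omega)
    _ = d := pow_one d
  have key : ∀ e : ℂ, ‖e‖ = 1 → ‖_root_.fderiv ℝ q w e‖ ≤ (|C| * 2 ^ (2 * N + 2) + |C| + K) * d ^ (N + 1) := by
    intro e he
    set δ := d ^ (N + 1) with hδ
    have hδ0 : 0 < δ := by positivity
    set h' : ℂ := (δ : ℝ) • e with hh'
    have hh'n : ‖h'‖ = δ := by rw [hh', norm_smul, he, Real.norm_of_nonneg hδ0.le, mul_one]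
    have hwb : w ∈ Metric.ball z r := by rw [Metric.mem_ball, dist_eq_norm]; linarith
    have hw2 : ‖w + h' - z‖ ≤ 2 * d := by
      calc ‖w + h' - z‖ = ‖(w - z) + h'‖ := by congr 1; ring
      _ ≤ d + δ := by rw [← hh'n]; exact norm_add_le _ _
      _ ≤ 2 * d := by linarith
    have hwb2 : w + h' ∈ Metric.ball z r := by rw [Metric.mem_ball, dist_eq_norm]; linarith
    have h1 := (hrt w hwb).1
    have h2 := (hrt _ hwb2).1
    have mv : ‖q (w + h') - q w - _root_.fderiv ℝ q w (w + h' - w)‖ ≤ (K * δ) * ‖w + h' - w‖ := by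
      refine (convex_segment w (w + h')).norm_image_sub_le_of_norm_fderiv_le' (𝕜 := ℝ) ?_ ?_
        (left_mem_segment _ _ _) (right_mem_segment _ _ _)
      · intro x _; exact (hq.differentiable (by norm_num)).differentiableAt
      · intro x hx
        have hxb : x ∈ Metric.ball z r := (convex_ball z r).segment_subset hwb hwb2 hx
        calc _ ≤ K * ‖x - w‖ := by
              have := hK.dist_le_mul x (hrt x hxb).2 w (hrt w hwb).2
              simpa [dist_eq_norm] using this
          _ ≤ K * δ := by
              gcongr
              have : ‖x - w‖ ≤ ‖(w + h') - w‖ := by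
                have := segment_subset_closedBall_left w (w + h') hx
                rw [Metric.mem_closedBall, dist_eq_norm, dist_eq_norm] at this
                rw [norm_sub_rev (w + h')]; exact this
              simpa [hh'n] using this
    rw [add_sub_cancel_left, hh'n] at mv
    have h1' : ‖q w‖ ≤ |C| * d ^ (2 * N + 2) := by
      refine h1.trans ?_
      rw [norm_pow, norm_norm]
      gcongr; exact le_abs_self C
    have h2' : ‖q (w + h')‖ ≤ |C| * (2 * d) ^ (2 * N + 2) := by
      refine h2.trans ?_
      rw [norm_pow, norm_norm]
      gcongr; exact le_abs_self C
    have e1 : _root_.fderiv ℝ q w h' = δ • _root_.fderiv ℝ q w e := by rw [hh', map_smul]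
    have e2 : ‖_root_.fderiv ℝ q w h'‖ = δ * ‖_root_.fderiv ℝ q w e‖ := by
      rw [e1, norm_smul, Real.norm_of_nonneg hδ0.le]
    have e3 : d ^ (2 * N + 2) = δ * δ := by rw [hδ]; ring
    have e4 : ‖_root_.fderiv ℝ q w h'‖ ≤ ‖q (w + h')‖ + ‖q w‖ + K * δ * δ := by
      have a1 : _root_.fderiv ℝ q w h' = q (w + h') - q w - (q (w + h') - q w - _root_.fderiv ℝ q w h') := by
        abel
      rw [a1]
      refine (norm_sub_le _ _).trans ?_
      exact add_le_add (norm_sub_le _ _) mv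
    have e5 : δ * ‖_root_.fderiv ℝ q w e‖ ≤ δ * ((|C| * 2 ^ (2 * N + 2) + |C| + K) * δ) := by
      rw [← e2]
      refine e4.trans ?_
      rw [mul_pow, e3] at h2'
      rw [e3] at h1'
      linarith
    exact le_of_mul_le_mul_left e5 hδ0
  rw [norm_pow, norm_norm]
  have : ‖_root_.fderiv ℝ q w‖ ≤ (|C| * 2 ^ (2 * N + 2) + |C| + K) * d ^ (N + 1) :=
    ContinuousLinearMap.opNorm_le_of_unit_norm (by positivity) key
  refine this.trans ?_
  have : d ^ (N+1) ≤ d ^ N := pow_le_pow_of_le_one hd0.le hw.2.le (by omega)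
  gcongr

lemma contDiff_indicator_of_flat_nat (S : Set ℂ) (n : ℕ) : ∀ {E : Type} [NormedAddCommGroup E]
    [NormedSpace ℝ E] (q : ℂ → E) (_ : ContDiff ℝ (⊤ : ℕ∞) q)
    (_ : ∀ z ∈ frontier S, FlatAt q z), ContDiff ℝ n (S.indicator q) := by
  have main : ∀ {E : Type} [NormedAddCommGroup E]
    [NormedSpace ℝ E] (q : ℂ → E) (_ : ContDiff ℝ (⊤ : ℕ∞) q)
    (_ : ∀ z ∈ frontier S, FlatAt q z) (z : ℂ), HasFDerivAt (S.indicator q) (S.indicator (fderiv ℝ q) z) z := by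
    intro E _ _ q hq hflat z
    have hqd := (hq.differentiable (by norm_num)).differentiableAt (x := z)
    by_cases hz : z ∈ frontier S
    · have hf := hflat z hz
      have h0 : S.indicator (fderiv ℝ q) z = 0 := by
        by_cases h : z ∈ S
        · rw [indicator_of_mem h]; exact hf.hasFDerivAt.fderiv
        · rw [indicator_of_notMem h]
      rw [h0]
      apply FlatAt.hasFDerivAt
      intro N
      refine IsBigO.trans (IsBigO.of_bound 1 ?_) (hf N)
      filter_upwards with w
      rw [one_mul]; exact norm_indicator_le_norm_self _ _
    · by_cases h : z ∈ S
      · rw [indicator_of_mem h]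
        have hi : z ∈ interior S := by
          by_contra hh; exact hz ⟨subset_closure h, hh⟩
        refine hqd.hasFDerivAt.congr_of_eventuallyEq ?_
        filter_upwards [mem_interior_iff_mem_nhds.1 hi] with w hw
        rw [indicator_of_mem hw]
      · rw [indicator_of_notMem h]
        have hi : z ∉ closure S := by
          intro hh; exact hz ⟨hh, fun h' => h (interior_subset h')⟩
        refine (hasFDerivAt_const (0 : E) z).congr_of_eventuallyEq ?_
        filter_upwards [isClosed_closure.isOpen_compl.mem_nhds hi] with w hw
        rw [indicator_of_notMem (fun h' => hw (subset_closure h'))]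
  induction n with
  | zero =>
    intro E _ _ q hq hflat
    simp only [Nat.cast_zero, contDiff_zero]
    exact continuous_iff_continuousAt.2 fun z => (main q hq hflat z).continuousAt
  | succ n ih =>
    intro E _ _ q hq hflat
    push_cast
    rw [contDiff_succ_iff_fderiv]
    refine ⟨fun z => (main q hq hflat z).differentiableAt, by simp, ?_⟩
    have : fderiv ℝ (S.indicator q) = S.indicator (fderiv ℝ q) :=
      funext fun z => (main q hq hflat z).fderiv
    rw [this]
    exact ih (fderiv ℝ q) (hq.fderiv_right (by norm_cast)) (fun z hz => (hflat z hz).fderiv hq)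

lemma contDiff_indicator_of_flat (S : Set ℂ) {E : Type} [NormedAddCommGroup E]
    [NormedSpace ℝ E] (q : ℂ → E) (hq : ContDiff ℝ (⊤ : ℕ∞) q)
    (hf : ∀ z ∈ frontier S, FlatAt q z) : ContDiff ℝ (⊤ : ℕ∞) (S.indicator q) :=
  contDiff_infty.2 fun n => contDiff_indicator_of_flat_nat S n q hq hf

lemma fourier_data (g : ℝ → ℂ) (hg : ContDiff ℝ (⊤ : ℕ∞) g) (hper : ∀ θ, g (θ + 2 * π) = g θ) :
    ∃ c : ℤ → ℂ, (∀ k : ℕ, ∃ C : ℝ, ∀ n : ℤ, |(n : ℝ)| ^ k * ‖c n‖ ≤ C) ∧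
      ∀ x : ℝ, HasSum (fun n : ℤ => c n * Complex.exp (I * n * x)) (g x) := by
  let J : ℕ → ℤ → ℂ := fun k n => ∫ x in (0:ℝ)..(2 * π), Complex.exp (-(I * n * x)) * iteratedDeriv k g x
  have hsm : ∀ k, ContDiff ℝ 1 (iteratedDeriv k g) := by
    intro k
    rw [iteratedDeriv_eq_iterate]
    exact ContDiff.iterate_deriv' 1 k (hg.of_le (by exact_mod_cast le_top))
  have hper' : ∀ k θ, iteratedDeriv k g (θ + 2 * π) = iteratedDeriv k g θ := by
    intro k θ
    have h1 : (fun z => g (z + 2 * π)) = g := funext hper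
    conv_rhs => rw [← h1]
    rw [iteratedDeriv_comp_add_const]
  have hexp : ∀ n : ℤ, ∀ x : ℝ, HasDerivAt (fun x : ℝ => Complex.exp (-(I * n * x)))
      (Complex.exp (-(I * n * x)) * (-(I * n))) x := by
    intro n x
    have h1 : HasDerivAt (fun x : ℝ => -(I * n * (x : ℂ))) (-(I * n)) x := by
      have h := ((hasDerivAt_id x).ofReal_comp.const_mul (I * n)).neg
      simp only [id_eq, ofReal_one, mul_one] at h
      exact h
    exact h1.cexp
  have hJ : ∀ k n, J (k + 1) n = (I * n) * J k n := by
    intro k n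
    have := intervalIntegral.integral_mul_deriv_eq_deriv_mul (a := 0) (b := 2 * π)
      (u := fun x : ℝ => Complex.exp (-(I * n * x))) (v := iteratedDeriv k g)
      (u' := fun x : ℝ => Complex.exp (-(I * n * x)) * (-(I * n))) (v' := iteratedDeriv (k + 1) g)
      (fun x _ => hexp n x)
      (fun x _ => by
        rw [iteratedDeriv_succ]
        exact ((hsm k).differentiable (by norm_num)).differentiableAt.hasDerivAt)
      (Continuous.intervalIntegrable (by fun_prop) _ _)
      ((hsm (k + 1)).continuous.intervalIntegrable _ _)
    simp only [J]
    rw [this]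
    have h0 : iteratedDeriv k g (2 * π) = iteratedDeriv k g 0 := by
      simpa using hper' k 0
    have h1 : Complex.exp (-(I * n * ((2 * π : ℝ) : ℂ))) = 1 := by
      rw [Complex.exp_eq_one_iff]
      exact ⟨-n, by push_cast; ring⟩
    rw [h0, h1, ← intervalIntegral.integral_const_mul]
    simp only [ofReal_zero, mul_zero, neg_zero, Complex.exp_zero, sub_self, zero_sub]
    rw [← intervalIntegral.integral_neg]
    congr 1
    ext x; ring
  have hJ' : ∀ k n, J k n = (I * n) ^ k * J 0 n := by
    intro k n
    induction k with
    | zero => simp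
    | succ k ih => rw [hJ, ih]; ring
  have hbd : ∀ k, ∃ C : ℝ, ∀ n, ‖J k n‖ ≤ C := by
    intro k
    obtain ⟨M, hM⟩ := isCompact_Icc.exists_bound_of_continuousOn
      ((hsm k).continuous.continuousOn (s := Icc 0 (2 * π)))
    refine ⟨M * |2 * π - 0|, fun n => ?_⟩
    refine intervalIntegral.norm_integral_le_of_norm_le_const fun x hx => ?_
    rw [norm_mul]
    have : ‖Complex.exp (-(I * n * x))‖ = 1 := by
      rw [Complex.norm_exp]; simp
    rw [this, one_mul]
    rw [uIoc_of_le (by positivity)] at hx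
    exact hM x ⟨hx.1.le, hx.2⟩
  have : Fact (0 < 2 * π) := ⟨by positivity⟩
  have hp : Function.Periodic g (2 * π) := hper
  let F : C(AddCircle (2 * π), ℂ) := ⟨hp.lift, by
    apply continuous_quot_lift; exact hg.continuous⟩
  have hF : ∀ x : ℝ, F (x : AddCircle (2 * π)) = g x := fun x => hp.lift_coe x
  have hc : ∀ n, fourierCoeff F n = (1 / (2 * π) : ℝ) * J 0 n := by
    intro n
    rw [fourierCoeff_eq_intervalIntegral F n 0, zero_add]
    simp only [J, iteratedDeriv_zero]
    rw [Complex.real_smul]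
    congr 2
    ext x
    rw [hF, smul_eq_mul, fourier_coe_apply]
    congr 2
    push_cast
    have : (π : ℂ) ≠ 0 := by exact_mod_cast Real.pi_ne_zero
    field_simp
  have hdec : ∀ k : ℕ, ∃ C : ℝ, ∀ n : ℤ, |(n : ℝ)| ^ k * ‖fourierCoeff F n‖ ≤ C := by
    intro k
    obtain ⟨C, hC⟩ := hbd k
    refine ⟨|1 / (2 * π)| * C, fun n => ?_⟩
    have := hC n
    rw [hJ', norm_mul, norm_pow, norm_mul, norm_I, one_mul, norm_intCast] at this
    rw [hc, norm_mul, norm_real, Real.norm_eq_abs]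
    calc _ = |1 / (2 * π)| * (|(n:ℝ)| ^ k * ‖J 0 n‖) := by ring
      _ ≤ _ := by gcongr
  refine ⟨fun n => fourierCoeff F n, hdec, ?_⟩
  intro x
  have hs : Summable (fourierCoeff F) := by
    obtain ⟨C, hC⟩ := hdec 2
    obtain ⟨C0, hC0⟩ := hdec 0
    have : Summable fun n : ℤ => C * (1 / (n:ℝ) ^ 2) :=
      (Real.summable_one_div_int_pow.2 (by norm_num)).mul_left C
    refine Summable.of_norm_bounded_eventually this ?_
    rw [Filter.eventually_cofinite]
    refine (Set.finite_singleton (0:ℤ)).subset ?_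
    intro n hn
    by_contra h0
    apply hn
    have hn0 : (n : ℝ) ≠ 0 := by exact_mod_cast h0
    have := hC n
    rw [sq_abs] at this
    rw [mul_one_div, le_div_iff₀ (by positivity)]
    linarith
  have := has_pointwise_sum_fourier_series_of_summable hs (x : AddCircle (2 * π))
  rw [hF] at this
  convert this using 2 with n
  rw [smul_eq_mul, fourier_coe_apply]
  congr 2
  push_cast
  have : (π : ℂ) ≠ 0 := by exact_mod_cast Real.pi_ne_zero
  field_simp

/-- twice the Wirtinger derivative -/
noncomputable def dbar (φ : ℂ → ℂ) (z : ℂ) : ℂ := fderiv ℝ φ z 1 + I * fderiv ℝ φ z I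

lemma dbar_contDiff {φ : ℂ → ℂ} (h : ContDiff ℝ (⊤ : ℕ∞) φ) : ContDiff ℝ (⊤ : ℕ∞) (dbar φ) := by
  have h1 : ContDiff ℝ (⊤ : ℕ∞) (fderiv ℝ φ) := h.fderiv_right (by norm_cast)
  unfold dbar
  exact (h1.clm_apply contDiff_const).add (contDiff_const.mul (h1.clm_apply contDiff_const))

lemma dbar_eq_zero {φ : ℂ → ℂ} {z : ℂ} (h : DifferentiableAt ℂ φ z) : dbar φ z = 0 := by
  unfold dbar
  have h1 := (h.hasFDerivAt.restrictScalars ℝ).fderiv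
  rw [h1]
  simp only [ContinuousLinearMap.coe_restrictScalars']
  have : fderiv ℂ φ z I = I * fderiv ℂ φ z 1 := by
    rw [← smul_eq_mul, ← map_smul, smul_eq_mul, mul_one]
  rw [this, ← mul_assoc, I_mul_I]; ring

lemma exists_basic_cutoff : ∃ E : ℂ → ℂ, ContDiff ℝ (⊤ : ℕ∞) E ∧
    (∀ x : ℝ, E x = Complex.exp (I * x)) ∧ (∀ z : ℂ, |z.im| < 1 → dbar E z = 0) ∧
    ∀ k : ℕ, ∃ M : ℝ, ∀ z, ‖iteratedFDeriv ℝ k E z‖ ≤ M := by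
  let χ : ContDiffBump (0 : ℝ) := ⟨1, 2, by norm_num, by norm_num⟩
  let E : ℂ → ℂ := fun z => Complex.exp (I * z) * (χ z.im : ℝ)
  have hE : ContDiff ℝ (⊤ : ℕ∞) E := by
    have h1 : ContDiff ℝ (⊤ : ℕ∞) (fun z : ℂ => Complex.exp (I * z)) :=
      (contDiff_const.mul contDiff_id).cexp
    have h2 : ContDiff ℝ (⊤ : ℕ∞) (fun z : ℂ => ((χ z.im : ℝ) : ℂ)) :=
      ofRealCLM.contDiff.comp (χ.contDiff.comp imCLM.contDiff)
    exact h1.mul h2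
  refine ⟨E, hE, ?_, ?_, ?_⟩
  · intro x
    have : χ 0 = 1 := χ.one_of_mem_closedBall (by simp [χ])
    simp [E, this]
  · intro z hz
    apply dbar_eq_zero
    have : E =ᶠ[𝓝 z] fun z => Complex.exp (I * z) := by
      have h1 : ∀ᶠ w : ℂ in 𝓝 z, |w.im| < 1 :=
        (continuous_abs.comp continuous_im).continuousAt.eventually_lt continuousAt_const hz
      filter_upwards [h1] with w hw
      have : χ w.im = 1 := χ.one_of_mem_closedBall (by simp [χ]; exact hw.le)
      simp [E, this]
    exact DifferentiableAt.congr_of_eventuallyEq (by fun_prop) this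
  · intro k
    have hcont : Continuous (iteratedFDeriv ℝ k E) :=
      hE.continuous_iteratedFDeriv (by exact_mod_cast le_top)
    have hK : IsCompact (Icc (0:ℝ) (2 * π) ×ℂ Icc (-2:ℝ) 2) := isCompact_Icc.reProdIm isCompact_Icc
    obtain ⟨M, hM⟩ := hK.exists_bound_of_continuousOn hcont.continuousOn
    have hM0 : 0 ≤ M := (norm_nonneg _).trans (hM 0 (by simp [mem_reProdIm]; positivity))
    refine ⟨M, fun z => ?_⟩
    by_cases hz : |z.im| ≤ 2
    · obtain ⟨m, hm, -⟩ := existsUnique_add_zsmul_mem_Ico (show 0 < 2 * π by positivity) z.re 0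
      have hper : (fun w => E (w + (m : ℂ) * (2 * π))) = E := by
        ext w
        simp only [E]
        congr 1
        · rw [Complex.exp_eq_exp_iff_exists_int]
          exact ⟨m, by ring⟩
        · simp
      have := iteratedFDeriv_comp_add_right (𝕜 := ℝ) (f := E) k ((m : ℂ) * (2 * π)) z
      rw [hper] at this
      rw [this]
      apply hM
      rw [mem_reProdIm]
      simp only [zsmul_eq_mul, zero_add] at hm
      refine ⟨?_, ?_⟩
      · simpa using ⟨hm.1, hm.2.le⟩
      · simpa [abs_le] using hz
    · push Not at hz
      have h1 : E =ᶠ[𝓝 z] fun _ => 0 := by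
        have h1 : ∀ᶠ w : ℂ in 𝓝 z, 2 < |w.im| :=
          continuousAt_const.eventually_lt (continuous_abs.comp continuous_im).continuousAt hz
        filter_upwards [h1] with w hw
        have : χ w.im = 0 := χ.zero_of_le_dist (by simp [χ]; exact hw.le)
        simp [E, this]
      have h2 := (h1.iteratedFDeriv ℝ k).eq_of_nhds
      rw [h2]
      have : iteratedFDeriv ℝ k (fun _ : ℂ => (0 : ℂ)) = 0 := iteratedFDeriv_fun_zero
      simp [this, hM0]

/-- almost analytic extension -/
lemma exists_almost_analytic (g : ℝ → ℂ) (hg : ContDiff ℝ (⊤ : ℕ∞) g)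
    (hper : ∀ θ, g (θ + 2 * π) = g θ) :
    ∃ G : ℂ → ℂ, ContDiff ℝ (⊤ : ℕ∞) G ∧ (∀ x : ℝ, G x = g x) ∧ ∀ x : ℝ, FlatAt (dbar G) x := by
  obtain ⟨c, hdec, hsum⟩ := fourier_data g hg hper
  obtain ⟨E, hE, hEx, hE0, hEM⟩ := exists_basic_cutoff
  choose M hM using hEM
  have hS : ∀ k : ℕ, Summable fun n : ℤ => |(n : ℝ)| ^ k * ‖c n‖ := by
    intro k
    obtain ⟨C, hC⟩ := hdec (k + 2)
    have : Summable fun n : ℤ => C * (1 / (n:ℝ) ^ 2) :=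
      (Real.summable_one_div_int_pow.2 (by norm_num)).mul_left C
    refine Summable.of_norm_bounded_eventually this ?_
    rw [Filter.eventually_cofinite]
    refine (Set.finite_singleton (0:ℤ)).subset ?_
    intro n hn
    by_contra h0
    apply hn
    have hn0 : (n : ℝ) ≠ 0 := by exact_mod_cast h0
    have := hC n
    rw [pow_add, sq_abs] at this
    rw [mul_one_div, le_div_iff₀ (by positivity), Real.norm_of_nonneg (by positivity)]
    linarith
  let T : ℤ → ℂ → ℂ := fun n z => c n • E ((n : ℝ) • z)
  have hcs : ∀ n : ℤ, ContDiff ℝ (⊤ : ℕ∞) fun z : ℂ => E ((n : ℝ) • z) :=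
    fun n => hE.comp (contDiff_const_smul _)
  have hT : ∀ n, ContDiff ℝ (⊤ : ℕ∞) (T n) := fun n => (hcs n).const_smul (c n)
  have hTb : ∀ (k : ℕ) (n : ℤ) (z : ℂ), ‖iteratedFDeriv ℝ k (T n) z‖ ≤ (|(n : ℝ)| ^ k * ‖c n‖) * M k := by
    intro k n z
    have h1 : iteratedFDeriv ℝ k (T n) z = c n • iteratedFDeriv ℝ k (fun z : ℂ => E ((n : ℝ) • z)) z :=
      iteratedFDeriv_const_smul_apply' ((hcs n).of_le (by exact_mod_cast le_top)).contDiffAt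
    rw [h1, iteratedFDeriv_comp_const_smul _ (hE.of_le (by exact_mod_cast le_top)),
      norm_smul, norm_smul, norm_pow, Real.norm_eq_abs]
    calc _ ≤ ‖c n‖ * (|(n:ℝ)| ^ k * M k) := by gcongr; exact hM _ _
      _ = _ := by ring
  refine ⟨fun z => ∑' n, T n z, ?_, ?_, ?_⟩
  · exact contDiff_tsum (v := fun k (n : ℤ) => (|(n : ℝ)| ^ k * ‖c n‖) * M k) hT
      (fun k _ => (hS k).mul_right _) (fun k n z _ => hTb k n z)
  · intro x
    rw [← (hsum x).tsum_eq]
    refine tsum_congr fun n => ?_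
    have := hEx (n * x)
    push_cast at this
    simp [T, this, mul_assoc]
  · intro x N
    have hder : ∀ z, fderiv ℝ (fun z => ∑' n, T n z) z = ∑' n, fderiv ℝ (T n) z := by
      intro z
      refine fderiv_tsum_apply (u := fun n : ℤ => (|(n : ℝ)| ^ 1 * ‖c n‖) * M 1) ((hS 1).mul_right _)
        (fun n => (hT n).differentiable (by norm_num)) ?_ (x₀ := 0) ?_ z
      · intro n w
        rw [← norm_iteratedFDeriv_one]; exact hTb 1 n w
      · refine Summable.of_norm_bounded ((hS 0).mul_right (M 0)) fun n => ?_
        have := hTb 0 n 0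
        rwa [norm_iteratedFDeriv_zero] at this
    have hTd : ∀ n z, ‖fderiv ℝ (T n) z‖ ≤ (|(n : ℝ)| ^ 1 * ‖c n‖) * M 1 := by
      intro n w
      rw [← norm_iteratedFDeriv_one]; exact hTb 1 n w
    have hsd : ∀ z, Summable fun n => fderiv ℝ (T n) z := fun z =>
      Summable.of_norm_bounded ((hS 1).mul_right (M 1)) fun n => hTd n z
    have hM1 : 0 ≤ M 1 := (norm_nonneg _).trans (hM 1 0)
    have hdb : ∀ z, dbar (fun z => ∑' n, T n z) z = ∑' n, dbar (T n) z := by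
      intro z
      have ev : ∀ v : ℂ, HasSum (fun n => fderiv ℝ (T n) z v) ((∑' n, fderiv ℝ (T n) z) v) := fun v =>
        (ContinuousLinearMap.apply ℝ ℂ v).hasSum (hsd z).hasSum
      have := (ev 1).add ((ev I).mul_left I)
      rw [dbar, hder]
      exact this.tsum_eq.symm
    have hTdb : ∀ n z, ‖dbar (T n) z‖ ≤ 2 * ((|(n : ℝ)| ^ 1 * ‖c n‖) * M 1) := by
      intro n z
      have h1 : ‖fderiv ℝ (T n) z 1‖ ≤ (|(n : ℝ)| ^ 1 * ‖c n‖) * M 1 :=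
        ((fderiv ℝ (T n) z).le_opNorm 1).trans (by simpa using hTd n z)
      have h2 : ‖fderiv ℝ (T n) z I‖ ≤ (|(n : ℝ)| ^ 1 * ‖c n‖) * M 1 :=
        ((fderiv ℝ (T n) z).le_opNorm I).trans (by simpa using hTd n z)
      calc ‖dbar (T n) z‖ ≤ ‖fderiv ℝ (T n) z 1‖ + ‖I * fderiv ℝ (T n) z I‖ := norm_add_le _ _
        _ ≤ _ := by rw [norm_mul, norm_I, one_mul]; linarith
    have hTdbar : ∀ n z, dbar (T n) z = c n * n * dbar E ((n : ℝ) • z) := by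
      intro n z
      have h1 : HasFDerivAt (T n) (c n • ((fderiv ℝ E ((n : ℝ) • z)).comp
          ((n : ℝ) • ContinuousLinearMap.id ℝ ℂ))) z := by
        have h2 : HasFDerivAt E (fderiv ℝ E ((n : ℝ) • z)) ((n : ℝ) • z) :=
          (hE.differentiable (by norm_num)).differentiableAt.hasFDerivAt
        exact (h2.comp z ((hasFDerivAt_id z).const_smul (n : ℝ))).const_smul (c n)
      rw [dbar, h1.fderiv, dbar]
      have e : ∀ v : ℂ, (c n • ((fderiv ℝ E ((n : ℝ) • z)).comp
          ((n : ℝ) • ContinuousLinearMap.id ℝ ℂ))) v = c n * (n * fderiv ℝ E ((n : ℝ) • z) v) := by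
        intro v
        change c n • (fderiv ℝ E ((n : ℝ) • z)) ((n : ℝ) • v) = _
        rw [map_smul, smul_eq_mul, real_smul]
        push_cast
        rfl
      rw [e, e]
      ring
    have hTf : ∀ n z, ‖dbar (T n) z‖ ≤ (|(n : ℝ)| ^ (N + 1) * ‖c n‖) * (2 * M 1 * |z.im| ^ N) := by
      intro n z
      by_cases hz : |((n : ℝ) • z).im| < 1
      · rw [hTdbar, hE0 _ hz, mul_zero, norm_zero]; positivity
      · push Not at hz
        simp only [smul_im, smul_eq_mul, abs_mul] at hz
        have h1 : 1 ≤ (|(n:ℝ)| * |z.im|) ^ N := one_le_pow₀ hz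
        calc ‖dbar (T n) z‖ ≤ 2 * ((|(n : ℝ)| ^ 1 * ‖c n‖) * M 1) * 1 := by rw [mul_one]; exact hTdb n z
          _ ≤ 2 * ((|(n : ℝ)| ^ 1 * ‖c n‖) * M 1) * (|(n:ℝ)| * |z.im|) ^ N := by gcongr
          _ = _ := by ring
    refine IsBigO.of_bound ((∑' n : ℤ, |(n : ℝ)| ^ (N + 1) * ‖c n‖) * (2 * M 1)) ?_
    filter_upwards with w
    rw [hdb]
    have hb := tsum_of_norm_bounded ((hS (N + 1)).mul_right (2 * M 1 * |w.im| ^ N)).hasSum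
      (fun n => hTf n w)
    refine hb.trans ?_
    have : |w.im| ≤ ‖w - x‖ := by simpa using abs_im_le_norm (w - x)
    rw [tsum_mul_right, norm_pow, norm_norm, ← mul_assoc]
    have h0 : 0 ≤ ∑' n : ℤ, |(n : ℝ)| ^ (N + 1) * ‖c n‖ := tsum_nonneg fun n => by positivity
    gcongr


lemma eq_mod_period {γ : ℝ → ℂ} (hper : ∀ θ, γ (θ + 2 * π) = γ θ)
    (hinj : InjOn γ (Ico 0 (2 * π))) {s t : ℝ} (h : γ s = γ t) : ∃ n : ℤ, s = t + n * (2 * π) := by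
  have hp : Function.Periodic γ (2 * π) := hper
  obtain ⟨m, hm, -⟩ := existsUnique_add_zsmul_mem_Ico (show 0 < 2 * π by positivity) s 0
  obtain ⟨n, hn, -⟩ := existsUnique_add_zsmul_mem_Ico (show 0 < 2 * π by positivity) t 0
  simp only [zsmul_eq_mul, zero_add] at hm hn
  have h1 : γ (s + m * (2 * π)) = γ (t + n * (2 * π)) := by
    rw [hp.int_mul m s, hp.int_mul n t, h]
  have h2 := hinj hm hn h1
  exact ⟨n - m, by push_cast; linarith⟩

/-- twice the other Wirtinger derivative -/
noncomputable def del (φ : ℂ → ℂ) (z : ℂ) : ℂ := fderiv ℝ φ z 1 - I * fderiv ℝ φ z I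

lemma del_contDiff {φ : ℂ → ℂ} (h : ContDiff ℝ (⊤ : ℕ∞) φ) : ContDiff ℝ (⊤ : ℕ∞) (del φ) := by
  have h1 : ContDiff ℝ (⊤ : ℕ∞) (fderiv ℝ φ) := h.fderiv_right (by norm_cast)
  unfold del
  exact (h1.clm_apply contDiff_const).sub (contDiff_const.mul (h1.clm_apply contDiff_const))

lemma real_linear_decomp (L : ℂ →L[ℝ] ℂ) (v : ℂ) :
    L v = v.re * L 1 + v.im * L I := by
  conv_lhs => rw [show v = v.re • (1 : ℂ) + v.im • I by simp [Complex.re_add_im]]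
  rw [map_add, map_smul, map_smul]; simp

lemma fderiv_of_dbar_eq_zero {φ : ℂ → ℂ} {z : ℂ} (h : dbar φ z = 0) (v : ℂ) :
    fderiv ℝ φ z v = v * fderiv ℝ φ z 1 := by
  rw [real_linear_decomp]
  unfold dbar at h
  have h2 : fderiv ℝ φ z I = I * fderiv ℝ φ z 1 := by
    linear_combination (-I) * h + (fderiv ℝ φ z I) * I_mul_I
  rw [h2]
  conv_rhs => rw [← re_add_im v]
  ring

lemma exists_local_chart {γ : ℝ → ℂ} (hγ : ContDiff ℝ (⊤ : ℕ∞) γ)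
    (hper : ∀ θ, γ (θ + 2 * π) = γ θ) (hinj : InjOn γ (Ico 0 (2 * π)))
    (hder : ∀ θ, deriv γ θ ≠ 0) (θ₀ : ℝ) :
    ∃ (Γ : ℂ → ℂ) (e : OpenPartialHomeomorph ℂ ℂ), ContDiff ℝ (⊤ : ℕ∞) Γ ∧ (∀ x : ℝ, Γ x = γ x) ∧
      (∀ x : ℝ, FlatAt (dbar Γ) x) ∧ (∀ w, e w = Γ w) ∧ (θ₀ : ℂ) ∈ e.source ∧
      (∀ w ∈ e.source, del Γ w ≠ 0) ∧ ContDiffOn ℝ (⊤ : ℕ∞) e.symm e.target ∧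
      (∀ θ : ℝ, γ θ ∈ e.target → ∃ x : ℝ, (x : ℂ) ∈ e.source ∧ γ x = γ θ) := by
  obtain ⟨Γ, hΓ, hΓx, hΓf⟩ := exists_almost_analytic γ hγ hper
  have hΓd : Differentiable ℝ Γ := hΓ.differentiable (by norm_num)
  have hΓ1 : fderiv ℝ Γ θ₀ 1 = deriv γ θ₀ := by
    have h1 : HasDerivAt (fun x : ℝ => Γ x) (fderiv ℝ Γ θ₀ 1) θ₀ := by
      have h2 : HasDerivAt (fun x : ℝ => (x : ℂ)) 1 θ₀ := ofRealCLM.hasDerivAt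
      exact (hΓd θ₀).hasFDerivAt.comp_hasDerivAt θ₀ h2
    have h2 : (fun x : ℝ => Γ x) = γ := funext hΓx
    rw [h2] at h1
    exact h1.deriv.symm
  have hdb := (hΓf θ₀).eq_zero
  have hdel : del Γ θ₀ ≠ 0 := by
    have : del Γ θ₀ = 2 * deriv γ θ₀ := by
      unfold del
      rw [fderiv_of_dbar_eq_zero hdb I, hΓ1]
      linear_combination (-(deriv γ θ₀)) * I_mul_I
    rw [this]; exact mul_ne_zero two_ne_zero (hder θ₀)
  let L : ℂ ≃L[ℝ] ℂ := (ContinuousLinearEquiv.unitsEquivAut ℂ (Units.mk0 _ (hder θ₀))).restrictScalars ℝ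
  have hL : fderiv ℝ Γ θ₀ = (L : ℂ →L[ℝ] ℂ) := by
    ext v
    rw [fderiv_of_dbar_eq_zero hdb, hΓ1]; simp [L]
  have hfd : HasFDerivAt Γ (L : ℂ →L[ℝ] ℂ) θ₀ := hL ▸ (hΓd θ₀).hasFDerivAt
  let e0 := hΓ.contDiffAt.toOpenPartialHomeomorph Γ hfd (by norm_num)
  have he0 : (θ₀ : ℂ) ∈ e0.source := hΓ.contDiffAt.mem_toOpenPartialHomeomorph_source hfd (by norm_num)
  have he0c : ∀ w, e0 w = Γ w := fun w => rfl
  let V : Set ℂ := {w | fderiv ℝ Γ w ∈ range ((↑) : (ℂ ≃L[ℝ] ℂ) → ℂ →L[ℝ] ℂ)} ∩ {w | del Γ w ≠ 0}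
  have hVo : IsOpen V := by
    refine IsOpen.inter ?_ ?_
    · exact (ContinuousLinearEquiv.isOpen (𝕜 := ℝ) (E := ℂ) (F := ℂ)).preimage
        (hΓ.continuous_fderiv (by norm_num))
    · exact isOpen_ne_fun (del_contDiff hΓ).continuous continuous_const
  have hV : (θ₀ : ℂ) ∈ V := ⟨⟨L, hL.symm⟩, hdel⟩
  obtain ⟨ρ', hρ', hball'⟩ := Metric.isOpen_iff.1 (e0.open_source.inter hVo) θ₀ ⟨he0, hV⟩
  let ρ := min ρ' 1
  have hρ : 0 < ρ := lt_min hρ' one_pos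
  have hball : Metric.ball (θ₀ : ℂ) ρ ⊆ e0.source ∩ V :=
    (Metric.ball_subset_ball (min_le_left _ _)).trans hball'
  let K : Set ℂ := γ '' Icc (θ₀ + ρ / 2) (θ₀ - ρ / 2 + 2 * π)
  have hK : IsClosed K := (isCompact_Icc.image hγ.continuous).isClosed
  have hK0 : γ θ₀ ∉ K := by
    rintro ⟨t, ht, h⟩
    obtain ⟨n, hn⟩ := eq_mod_period hper hinj h
    have hpi : 0 < 2 * π := by positivity
    have h1 : 0 < (n : ℝ) * (2 * π) := by linarith [ht.1]
    have h2 : (n : ℝ) * (2 * π) < 1 * (2 * π) := by linarith [ht.2]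
    have h3 : (0 : ℝ) < n := (mul_pos_iff_of_pos_right hpi).1 h1
    have h4 : (n : ℝ) < 1 := lt_of_mul_lt_mul_right h2 hpi.le
    have h5 : (0 : ℤ) < n := by exact_mod_cast h3
    have h6 : n < (1 : ℤ) := by exact_mod_cast h4
    omega
  let s : Set ℂ := Metric.ball (θ₀ : ℂ) ρ ∩ Γ ⁻¹' Kᶜ
  have hs : IsOpen s := Metric.isOpen_ball.inter (hK.isOpen_compl.preimage hΓ.continuous)
  let e := e0.restrOpen s hs
  have hes : e.source = e0.source ∩ s := rfl
  have hec : ∀ w, e w = Γ w := fun w => rfl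
  refine ⟨Γ, e, hΓ, hΓx, hΓf, hec, ?_, ?_, ?_, ?_⟩
  · rw [hes]
    refine ⟨he0, Metric.mem_ball_self hρ, ?_⟩
    rw [mem_preimage, hΓx]; exact hK0
  · intro w hw
    rw [hes] at hw
    exact (hball hw.2.1).2.2
  · intro z hz
    have hw := e.map_target hz
    have hw' := hw
    rw [hes] at hw'
    obtain ⟨L', hL'⟩ := (hball hw'.2.1).2.1
    refine (e.contDiffAt_symm (f₀' := L') hz ?_ ?_).contDiffWithinAt
    · rw [hL']; exact (hΓd _).hasFDerivAt
    · exact hΓ.contDiffAt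
  · intro θ hθ
    have hw := e.map_target hθ
    have hw2 : Γ (e.symm (γ θ)) = γ θ := e.right_inv hθ
    rw [hes] at hw
    have hnK : γ θ ∉ K := by rw [← hw2]; exact hw.2.2
    obtain ⟨m, hm, -⟩ := existsUnique_add_zsmul_mem_Ico (show 0 < 2 * π by positivity) θ (θ₀ - ρ / 2)
    simp only [zsmul_eq_mul] at hm
    have hp : Function.Periodic γ (2 * π) := hper
    have hg : γ (θ + m * (2 * π)) = γ θ := hp.int_mul m θ
    refine ⟨θ + m * (2 * π), ?_, hg⟩
    have hlt : θ + m * (2 * π) < θ₀ + ρ / 2 := by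
      by_contra hh
      push Not at hh
      exact hnK ⟨_, ⟨hh, hm.2.le⟩, hg⟩
    have hb : ((θ + m * (2 * π) : ℝ) : ℂ) ∈ Metric.ball (θ₀ : ℂ) ρ := by
      rw [Metric.mem_ball, dist_eq_norm, ← ofReal_sub, norm_real, Real.norm_eq_abs, abs_lt]
      constructor <;> linarith [hm.1]
    rw [hes]
    refine ⟨(hball hb).1, hb, ?_⟩
    rw [mem_preimage, hΓx, hg]; exact hnK

lemma contDiff_bump_mul {p : ℂ} (χ : ContDiffBump p) {U : Set ℂ} (hU : IsOpen U)
    (h : Metric.closedBall p χ.rOut ⊆ U) {ψ : ℂ → ℂ} (hψ : ContDiffOn ℝ (⊤ : ℕ∞) ψ U) :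
    ContDiff ℝ (⊤ : ℕ∞) fun z => (χ z : ℂ) * ψ z := by
  rw [contDiff_iff_contDiffAt]
  intro z
  by_cases hz : z ∈ U
  · have h1 : ContDiff ℝ (⊤ : ℕ∞) (fun z : ℂ => ((χ z : ℝ) : ℂ)) := ofRealCLM.contDiff.comp χ.contDiff
    exact h1.contDiffAt.mul (hψ.contDiffAt (hU.mem_nhds hz))
  · have h1 : (fun z => (χ z : ℂ) * ψ z) =ᶠ[𝓝 z] fun _ => 0 := by
      have : z ∈ (Metric.closedBall p χ.rOut)ᶜ := fun h' => hz (h h')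
      filter_upwards [Metric.isClosed_closedBall.isOpen_compl.mem_nhds this] with w hw
      have : χ w = 0 := χ.zero_of_le_dist (by
        simp only [mem_compl_iff, Metric.mem_closedBall, not_le] at hw; exact hw.le)
      simp [this]
    exact contDiffAt_const.congr_of_eventuallyEq h1

lemma dbar_comp {ψ Γ : ℂ → ℂ} {w : ℂ} (hψ : DifferentiableAt ℝ ψ (Γ w)) (hΓ : DifferentiableAt ℝ Γ w) :
    2 * dbar (ψ ∘ Γ) w = del ψ (Γ w) * dbar Γ w + dbar ψ (Γ w) * (starRingEnd ℂ) (del Γ w) := by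
  unfold dbar del
  rw [fderiv_comp w hψ hΓ]
  simp only [ContinuousLinearMap.comp_apply]
  rw [real_linear_decomp (fderiv ℝ ψ (Γ w)) (fderiv ℝ Γ w 1),
    real_linear_decomp (fderiv ℝ ψ (Γ w)) (fderiv ℝ Γ w I)]
  generalize fderiv ℝ ψ (Γ w) 1 = a
  generalize fderiv ℝ ψ (Γ w) I = b
  generalize fderiv ℝ Γ w 1 = u
  generalize fderiv ℝ Γ w I = v
  apply Complex.ext <;> simp <;> ring

lemma exists_local_extension {γ : ℝ → ℂ} (hγ : ContDiff ℝ (⊤ : ℕ∞) γ)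
    (hper : ∀ θ, γ (θ + 2 * π) = γ θ) (hinj : InjOn γ (Ico 0 (2 * π)))
    (hder : ∀ θ, deriv γ θ ≠ 0) (f : ℂ → ℂ) (hf : ContDiff ℝ (⊤ : ℕ∞) fun θ => f (γ θ))
    (hcl : IsClosed (range γ)) (p : ℂ) :
    ∃ (φ : ℂ → ℂ) (U : Set ℂ), ContDiff ℝ (⊤ : ℕ∞) φ ∧ IsOpen U ∧ p ∈ U ∧
      ∀ z ∈ U, z ∈ range γ → φ z = f z ∧ FlatAt (dbar φ) z := by
  by_cases hp : p ∈ range γ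
  swap
  · exact ⟨fun _ => 0, (range γ)ᶜ, contDiff_const, hcl.isOpen_compl, hp, fun z hz hz' => absurd hz' hz⟩
  obtain ⟨θ₀, rfl⟩ := hp
  obtain ⟨Γ, e, hΓ, hΓx, hΓf, hec, hθ, hdel, hsymm, hreal⟩ := exists_local_chart hγ hper hinj hder θ₀
  obtain ⟨G, hG, hGx, hGf⟩ := exists_almost_analytic (fun θ => f (γ θ)) hf (fun θ => by
    simp only [hper])
  have hpt : γ θ₀ ∈ e.target := by
    have := e.map_source hθ
    rwa [hec, hΓx] at this
  obtain ⟨r, hr, hrt⟩ := Metric.isOpen_iff.1 e.open_target _ hpt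
  let χ : ContDiffBump (γ θ₀) := ⟨r / 4, r / 2, by positivity, by linarith⟩
  have hψ : ContDiffOn ℝ (⊤ : ℕ∞) (G ∘ e.symm) e.target := hG.comp_contDiffOn hsymm
  have hφ := contDiff_bump_mul χ e.open_target
    ((Metric.closedBall_subset_ball (by change r / 2 < r; linarith)).trans hrt) hψ
  set φ : ℂ → ℂ := fun z => (χ z : ℂ) * (G ∘ e.symm) z with hφdef
  have hUt : Metric.ball (γ θ₀) (r / 4) ⊆ e.target :=
    (Metric.ball_subset_ball (by linarith)).trans hrt
  have hφU : ∀ z ∈ Metric.ball (γ θ₀) (r / 4), φ z = G (e.symm z) := by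
    intro z hz
    have : χ z = 1 := χ.one_of_mem_closedBall (Metric.ball_subset_closedBall hz)
    simp [hφdef, this]
  refine ⟨φ, Metric.ball (γ θ₀) (r / 4), hφ, Metric.isOpen_ball, Metric.mem_ball_self (by positivity), ?_⟩
  rintro z hz ⟨θ, rfl⟩
  obtain ⟨x, hx, hxθ⟩ := hreal θ (hUt hz)
  have hsx : e.symm (γ θ) = x := by
    rw [← hxθ, ← hΓx, ← hec]; exact e.left_inv hx
  refine ⟨?_, ?_⟩
  · rw [hφU _ hz, hsx, hGx, hxθ]
  · have hid : ∀ z ∈ Metric.ball (γ θ₀) (r / 4), dbar φ z =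
        (2 * dbar G (e.symm z) - del φ z * dbar Γ (e.symm z)) *
          ((starRingEnd ℂ) (del Γ (e.symm z)))⁻¹ := by
      intro z hz
      have hzt := hUt hz
      have hw := e.map_target hzt
      have hΓw : Γ (e.symm z) = z := by rw [← hec]; exact e.right_inv hzt
      have h1 := dbar_comp (ψ := φ) (Γ := Γ) (w := e.symm z)
        ((hφ.differentiable (by norm_num)) _) ((hΓ.differentiable (by norm_num)) _)
      have h2 : (φ ∘ Γ) =ᶠ[𝓝 (e.symm z)] G := by
        have h3 : ∀ᶠ w in 𝓝 (e.symm z), Γ w ∈ Metric.ball (γ θ₀) (r / 4) :=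
          hΓ.continuous.continuousAt.eventually_mem (by rw [hΓw]; exact Metric.isOpen_ball.mem_nhds hz)
        filter_upwards [h3, e.open_source.mem_nhds hw] with w hw1 hw2
        rw [Function.comp_apply, hφU _ hw1, ← hec, e.left_inv hw2]
      have h4 : dbar (φ ∘ Γ) (e.symm z) = dbar G (e.symm z) := by
        unfold dbar; rw [h2.fderiv_eq]
      rw [h4, hΓw] at h1
      rw [h1]
      have : (starRingEnd ℂ) (del Γ (e.symm z)) ≠ 0 := by
        rw [Ne, map_eq_zero]; exact hdel _ hw
      field_simp
      ring
    have hsd : ContDiffAt ℝ (⊤ : ℕ∞) e.symm (γ θ) := hsymm.contDiffAt (e.open_target.mem_nhds (hUt hz))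
    have hsO : (fun z => e.symm z - x) =O[𝓝 (γ θ)] fun z => z - γ θ := by
      have := (hsd.differentiableAt (by norm_num)).isBigO_sub
      rwa [hsx] at this
    have hst : Tendsto e.symm (𝓝 (γ θ)) (𝓝 (x : ℂ)) := by
      have := hsd.continuousAt.tendsto
      rwa [hsx] at this
    intro N
    have hO : ∀ q : ℂ → ℂ, FlatAt q x → (fun z => q (e.symm z)) =O[𝓝 (γ θ)] fun z => ‖z - γ θ‖ ^ N := by
      intro q hq
      refine ((hq N).comp_tendsto hst).trans ?_
      exact (hsO.norm_norm).pow N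
    have h1 : (fun z => 2 * dbar G (e.symm z)) =O[𝓝 (γ θ)] fun z => ‖z - γ θ‖ ^ N :=
      (hO _ (hGf x)).const_mul_left 2
    have h2 : (fun z => del φ z * dbar Γ (e.symm z)) =O[𝓝 (γ θ)] fun z => ‖z - γ θ‖ ^ N := by
      have h3 : del φ =O[𝓝 (γ θ)] fun _ => (1 : ℝ) :=
        (del_contDiff hφ).continuous.continuousAt.tendsto.isBigO_one ℝ
      simpa using h3.mul (hO _ (hΓf x))
    have h3 : (fun z => ((starRingEnd ℂ) (del Γ (e.symm z)))⁻¹) =O[𝓝 (γ θ)] fun _ => (1 : ℝ) := by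
      have hc : Tendsto (fun z => ((starRingEnd ℂ) (del Γ (e.symm z)))⁻¹) (𝓝 (γ θ))
          (𝓝 ((starRingEnd ℂ) (del Γ x))⁻¹) := by
        refine Tendsto.inv₀ ?_ ?_
        · exact ((Complex.continuous_conj.comp (del_contDiff hΓ).continuous).tendsto _).comp hst
        · rw [Ne, map_eq_zero]; exact hdel _ hx
      exact hc.isBigO_one ℝ
    have h4 := (h1.sub h2).mul h3
    simp only [mul_one] at h4
    refine h4.congr' ?_ EventuallyEq.rfl
    filter_upwards [Metric.isOpen_ball.mem_nhds hz] with z hz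
    exact (hid z hz).symm


lemma removable_curve {γ : ℝ → ℂ} (hγ : ContDiff ℝ (⊤ : ℕ∞) γ)
    (hper : ∀ θ, γ (θ + 2 * π) = γ θ) (hinj : InjOn γ (Ico 0 (2 * π)))
    (hder : ∀ θ, deriv γ θ ≠ 0) {U : Set ℂ} (hU : IsOpen U) {H : ℂ → ℂ} (hHc : ContinuousOn H U)
    (hHd : ∀ z ∈ U, z ∉ range γ → DifferentiableAt ℂ H z) :
    ∀ z ∈ U, DifferentiableAt ℂ H z := by
  intro p hp
  by_cases hpr : p ∈ range γ
  swap
  · exact hHd p hp hpr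
  obtain ⟨θ₀, rfl⟩ := hpr
  obtain ⟨Γ, e, hΓ, hΓx, hΓf, hec, hθ, hdel, hsymm, hreal⟩ := exists_local_chart hγ hper hinj hder θ₀
  have hΓd : Differentiable ℝ Γ := hΓ.differentiable (by norm_num)
  have hfΓ : ContDiff ℝ (⊤ : ℕ∞) (fderiv ℝ Γ) := hΓ.fderiv_right (by norm_cast)
  have hopen : IsOpen (e.source ∩ Γ ⁻¹' U) := e.open_source.inter (hU.preimage hΓ.continuous)
  have hmem : (θ₀ : ℂ) ∈ e.source ∩ Γ ⁻¹' U := ⟨hθ, by rw [mem_preimage, hΓx]; exact hp⟩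
  obtain ⟨r', hr', hball⟩ := Metric.isOpen_iff.1 hopen _ hmem
  let r := r' / 2
  have hr : 0 < r := by positivity
  let Q : Set ℂ := Ioo (θ₀ - r) (θ₀ + r) ×ℂ Ioo (-r) r
  have hQo : IsOpen Q := isOpen_Ioo.reProdIm isOpen_Ioo
  have hQ : Q ⊆ e.source ∩ Γ ⁻¹' U := by
    intro w hw
    apply hball
    rw [Metric.mem_ball, dist_eq_norm]
    have h1 : |(w - θ₀).re| < r := by
      rw [abs_lt]; simp only [sub_re, ofReal_re]; constructor <;> linarith [hw.1.1, hw.1.2]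
    have h2 : |(w - θ₀).im| < r := by
      rw [abs_lt]; simp only [sub_im, ofReal_im]; constructor <;> linarith [hw.2.1, hw.2.2]
    have := norm_le_abs_re_add_abs_im (w - θ₀)
    have hrr : r + r = r' := by simp only [r]; ring
    linarith
  have hQ0 : (θ₀ : ℂ) ∈ Q := by
    simp [Q, mem_reProdIm, hr]
  -- off the real axis, Γ avoids the curve
  have hoff : ∀ w ∈ Q, w.im ≠ 0 → DifferentiableAt ℂ H (Γ w) := by
    intro w hw him
    refine hHd _ (hQ hw).2 ?_
    rintro ⟨θ, h⟩
    have ht : γ θ ∈ e.target := by rw [h, ← hec]; exact e.map_source (hQ hw).1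
    obtain ⟨x, hx, hxθ⟩ := hreal θ ht
    have : (x : ℂ) = w := by
      apply e.injOn hx (hQ hw).1
      rw [hec, hec, hΓx, hxθ, h]
    apply him
    rw [← this]; simp
  let A : ℂ → ℂ → ℂ := fun v w => H (Γ w) * fderiv ℝ Γ w v
  have hAc : ∀ v, ContinuousOn (A v) Q := by
    intro v
    refine ContinuousOn.mul ?_ (hfΓ.continuous.clm_apply continuous_const).continuousOn
    exact hHc.comp hΓ.continuous.continuousOn fun w hw => (hQ hw).2
  have hAd : ∀ v, ∀ w ∈ Q, w.im ≠ 0 → HasFDerivAt (A v) (H (Γ w) • (fderiv ℝ (fderiv ℝ Γ) w).flip v +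
      (fderiv ℝ Γ w v) • ((fderiv ℂ H (Γ w)).restrictScalars ℝ ∘L fderiv ℝ Γ w)) w := by
    intro v w hw him
    have h1 : HasFDerivAt (fun w => H (Γ w)) ((fderiv ℂ H (Γ w)).restrictScalars ℝ ∘L fderiv ℝ Γ w) w :=
      ((hoff w hw him).hasFDerivAt.restrictScalars ℝ).comp w (hΓd w).hasFDerivAt
    have h2 : HasFDerivAt (fun w => fderiv ℝ Γ w v) ((fderiv ℝ (fderiv ℝ Γ) w).flip v) w := by
      have := ((hfΓ.differentiable (by norm_num)) w).hasFDerivAt.clm_apply (hasFDerivAt_const v w)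
      simpa using this
    exact h1.mul h2
  have hcurl : ∀ w ∈ Q, w.im ≠ 0 → fderiv ℝ (A I) w 1 - fderiv ℝ (A 1) w I = 0 := by
    intro w hw him
    rw [(hAd I w hw him).fderiv, (hAd 1 w hw him).fderiv]
    have hs : fderiv ℝ (fderiv ℝ Γ) w 1 I = fderiv ℝ (fderiv ℝ Γ) w I 1 :=
      (hΓ.contDiffAt.isSymmSndFDerivAt (by rw [minSmoothness_of_isRCLikeNormedField]; exact WithTop.coe_le_coe.2 (le_top : (2:ℕ∞) ≤ ⊤))) 1 I
    have hl : ∀ u : ℂ, fderiv ℂ H (Γ w) u = u * fderiv ℂ H (Γ w) 1 := by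
      intro u
      rw [← smul_eq_mul, ← map_smul, smul_eq_mul, mul_one]
    have ev : ∀ v u : ℂ, (H (Γ w) • (fderiv ℝ (fderiv ℝ Γ) w).flip v +
      (fderiv ℝ Γ w v) • ((fderiv ℂ H (Γ w)).restrictScalars ℝ ∘L fderiv ℝ Γ w)) u =
      H (Γ w) * fderiv ℝ (fderiv ℝ Γ) w u v + fderiv ℝ Γ w v * fderiv ℂ H (Γ w) (fderiv ℝ Γ w u) :=
      fun v u => rfl
    rw [ev, ev, hs, hl (fderiv ℝ Γ w 1), hl (fderiv ℝ Γ w I)]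
    ring
  let m : ℝ × ℝ →L[ℝ] ℂ := (equivRealProdCLM.symm : ℝ × ℝ →L[ℝ] ℂ)
  have hm : ∀ x y : ℝ, m (x, y) = x + y * I := fun x y => by
    simp [m, equivRealProdCLM_symm_apply]
  have hmQ : ∀ x y : ℝ, m (x, y) ∈ Q ↔ x ∈ Ioo (θ₀ - r) (θ₀ + r) ∧ y ∈ Ioo (-r) r := by
    intro x y; rw [hm]; simp [Q, mem_reProdIm]
  have h0r : (0:ℝ) ∈ Ioo (-r) r := ⟨by linarith, hr⟩
  have hrect : ∀ x ∈ Ioo (θ₀ - r) (θ₀ + r), ∀ x' ∈ Ioo (θ₀ - r) (θ₀ + r), ∀ y ∈ Ioo (-r) r,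
      (∫ t in x..x', A 1 (m (t, 0))) = (∫ t in x..x', A 1 (m (t, y))) -
        (∫ s in (0:ℝ)..y, A I (m (x', s))) + ∫ s in (0:ℝ)..y, A I (m (x, s)) := by
    intro x hx x' hx' y hy
    have hsubx : uIcc x x' ⊆ Ioo (θ₀ - r) (θ₀ + r) := OrdConnected.uIcc_subset ordConnected_Ioo hx hx'
    have hsuby : uIcc 0 y ⊆ Ioo (-r) r := OrdConnected.uIcc_subset ordConnected_Ioo h0r hy
    have hsub : ∀ q ∈ uIcc x x' ×ˢ uIcc 0 y, m q ∈ Q := fun q hq =>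
      (hmQ q.1 q.2).2 ⟨hsubx hq.1, hsuby hq.2⟩
    have hIm : ∀ q : ℝ × ℝ, (m q).im = q.2 := fun q => by
      have := hm q.1 q.2; rw [this]; simp
    have hne : ∀ q ∈ Ioo (min x x') (max x x') ×ˢ Ioo (min 0 y) (max 0 y) \ ∅, m q ∈ Q ∧ q.2 ≠ 0 := by
      rintro q ⟨⟨h1, h2⟩, -⟩
      refine ⟨hsub q ⟨Ioo_subset_Icc_self h1, Ioo_subset_Icc_self h2⟩, ?_⟩
      intro h0
      rw [h0] at h2
      rcases le_total 0 y with h | h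
      · rw [min_eq_left h] at h2; exact lt_irrefl _ h2.1
      · rw [max_eq_left h] at h2; exact lt_irrefl _ h2.2
    have hAdm : ∀ v q, m q ∈ Q → q.2 ≠ 0 → HasFDerivAt (fun q => A v (m q)) (fderiv ℝ (A v) (m q) ∘L m) q := by
      intro v q h1 h2
      have h3 := (hAd v (m q) h1 (by rwa [hIm])).differentiableAt.hasFDerivAt
      exact h3.comp q m.hasFDerivAt
    have hzero : ∀ q ∈ uIcc x x' ×ˢ uIcc 0 y,
        (if q.2 = 0 then (0 : ℝ × ℝ →L[ℝ] ℂ) else fderiv ℝ (A I) (m q) ∘L m) (1, 0) +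
        (if q.2 = 0 then (0 : ℝ × ℝ →L[ℝ] ℂ) else -(fderiv ℝ (A 1) (m q) ∘L m)) (0, 1) = 0 := by
      intro q hq
      split_ifs with h
      · simp
      · have h1 : m (1, 0) = 1 := by rw [hm]; simp
        have h2 : m (0, 1) = I := by rw [hm]; simp
        have := hcurl (m q) (hsub q hq) (by rwa [hIm])
        change fderiv ℝ (A I) (m q) (m (1, 0)) + -(fderiv ℝ (A 1) (m q) (m (0, 1))) = 0
        rw [h1, h2, ← sub_eq_add_neg]; exact this
    have key := MeasureTheory.integral2_divergence_prod_of_hasFDerivAt_off_countable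
      (fun q => A I (m q)) (fun q => -A 1 (m q))
      (fun q => if q.2 = 0 then 0 else fderiv ℝ (A I) (m q) ∘L m)
      (fun q => if q.2 = 0 then 0 else -(fderiv ℝ (A 1) (m q) ∘L m)) x 0 x' y ∅ countable_empty
      ((hAc I).comp m.continuous.continuousOn hsub)
      ((hAc 1).comp m.continuous.continuousOn hsub).neg
      (fun q hq => by
        rw [if_neg (hne q hq).2]; exact hAdm I q (hne q hq).1 (hne q hq).2)
      (fun q hq => by
        rw [if_neg (hne q hq).2]; exact (hAdm 1 q (hne q hq).1 (hne q hq).2).neg)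
      (MeasureTheory.IntegrableOn.congr_fun (f := fun _ => 0) MeasureTheory.integrableOn_zero
        (fun q hq => (hzero q hq).symm) (measurableSet_uIcc.prod measurableSet_uIcc))
    have hlhs : (∫ t in x..x', ∫ s in (0:ℝ)..y,
        (if (t, s).2 = 0 then (0 : ℝ × ℝ →L[ℝ] ℂ) else fderiv ℝ (A I) (m (t, s)) ∘L m) (1, 0) +
        (if (t, s).2 = 0 then (0 : ℝ × ℝ →L[ℝ] ℂ) else -(fderiv ℝ (A 1) (m (t, s)) ∘L m)) (0, 1)) = 0 := by
      rw [intervalIntegral.integral_congr (g := fun _ => 0)]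
      · simp
      · intro t ht
        simp only
        rw [intervalIntegral.integral_congr (g := fun _ => 0)]
        · simp
        · intro s hs
          exact hzero (t, s) ⟨ht, hs⟩
    rw [hlhs] at key
    simp only [intervalIntegral.integral_neg] at key
    linear_combination -key
  let K : ℂ → ℂ := fun w => (∫ t in θ₀..w.re, A 1 (m (t, 0))) + ∫ s in (0:ℝ)..w.im, A I (m (w.re, s))
  have hintx : ∀ v, ∀ x ∈ Ioo (θ₀ - r) (θ₀ + r), ∀ x' ∈ Ioo (θ₀ - r) (θ₀ + r), ∀ y ∈ Ioo (-r) r,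
      IntervalIntegrable (fun t => A v (m (t, y))) MeasureTheory.volume x x' := by
    intro v x hx x' hx' y hy
    refine ContinuousOn.intervalIntegrable ?_
    refine (hAc v).comp (by fun_prop) fun t ht => ?_
    exact (hmQ _ _).2 ⟨OrdConnected.uIcc_subset ordConnected_Ioo hx hx' ht, hy⟩
  have hinty : ∀ v, ∀ x ∈ Ioo (θ₀ - r) (θ₀ + r), ∀ y ∈ Ioo (-r) r, ∀ y' ∈ Ioo (-r) r,
      IntervalIntegrable (fun s => A v (m (x, s))) MeasureTheory.volume y y' := by
    intro v x hx y hy y' hy'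
    refine ContinuousOn.intervalIntegrable ?_
    refine (hAc v).comp (by fun_prop) fun t ht => ?_
    exact (hmQ _ _).2 ⟨hx, OrdConnected.uIcc_subset ordConnected_Ioo hy hy' ht⟩
  have hθI : θ₀ ∈ Ioo (θ₀ - r) (θ₀ + r) := ⟨by linarith, by linarith⟩
  have hKdiff : ∀ w ∈ Q, ∀ w' ∈ Q, K w' - K w = (∫ t in w.re..w'.re, A 1 (m (t, w'.im))) +
      ∫ s in w.im..w'.im, A I (m (w.re, s)) := by
    intro w hw w' hw'
    have h1 := hrect w.re hw.1 w'.re hw'.1 w'.im hw'.2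
    have h2 := intervalIntegral.integral_interval_sub_left
      (hintx 1 θ₀ hθI w'.re hw'.1 0 h0r) (hintx 1 θ₀ hθI w.re hw.1 0 h0r)
    have h3 := intervalIntegral.integral_interval_sub_left
      (hinty I w.re hw.1 0 h0r w'.im hw'.2) (hinty I w.re hw.1 0 h0r w.im hw.2)
    simp only [K]
    linear_combination h1 + h2 + h3
  have hKd : ∀ w ∈ Q, HasFDerivAt K (H (Γ w) • fderiv ℝ Γ w) w := by
    intro w hw
    rw [hasFDerivAt_iff_isLittleO, isLittleO_iff]
    intro ε hε
    have hc : ∀ v, ∀ᶠ w' in 𝓝 w, ‖A v w' - A v w‖ < ε / 2 := by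
      intro v
      have := ((hAc v).continuousAt (hQo.mem_nhds hw)).tendsto
      have := (Metric.tendsto_nhds.1 this) (ε / 2) (by positivity)
      simpa [dist_eq_norm] using this
    obtain ⟨δ, hδ, hδ'⟩ := Metric.eventually_nhds_iff_ball.1 ((hc 1).and (hc I))
    filter_upwards [Metric.ball_mem_nhds w (show 0 < δ / 2 by positivity), hQo.mem_nhds hw] with w' hw'b hw'
    rw [Metric.mem_ball, dist_eq_norm] at hw'b
    have hre : |w'.re - w.re| ≤ ‖w' - w‖ := by simpa using abs_re_le_norm (w' - w)
    have him : |w'.im - w.im| ≤ ‖w' - w‖ := by simpa using abs_im_le_norm (w' - w)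
    have hnear : ∀ x y : ℝ, |x - w.re| ≤ |w'.re - w.re| → |y - w.im| ≤ |w'.im - w.im| →
        m (x, y) ∈ Metric.ball w δ := by
      intro x y h1 h2
      rw [Metric.mem_ball, dist_eq_norm, hm]
      have := norm_le_abs_re_add_abs_im (x + y * I - w)
      simp at this
      linarith
    have hu : ∀ {a b t : ℝ}, t ∈ uIoc a b → |t - a| ≤ |b - a| := by
      intro a b t ht
      exact abs_sub_left_of_mem_uIcc (uIoc_subset_uIcc ht)
    have i1 : (∫ t in w.re..w'.re, (A 1 (m (t, w'.im)) - A 1 w)) =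
        (∫ t in w.re..w'.re, A 1 (m (t, w'.im))) - (w'.re - w.re : ℝ) * A 1 w := by
      rw [intervalIntegral.integral_sub (hintx 1 w.re hw.1 w'.re hw'.1 w'.im hw'.2)
        intervalIntegrable_const, intervalIntegral.integral_const, real_smul]
    have i2 : (∫ s in w.im..w'.im, (A I (m (w.re, s)) - A I w)) =
        (∫ s in w.im..w'.im, A I (m (w.re, s))) - (w'.im - w.im : ℝ) * A I w := by
      rw [intervalIntegral.integral_sub (hinty I w.re hw.1 w.im hw.2 w'.im hw'.2)
        intervalIntegrable_const, intervalIntegral.integral_const, real_smul]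
    have e1 : K w' - K w - (H (Γ w) • fderiv ℝ Γ w) (w' - w) =
        (∫ t in w.re..w'.re, (A 1 (m (t, w'.im)) - A 1 w)) +
        ∫ s in w.im..w'.im, (A I (m (w.re, s)) - A I w) := by
      rw [i1, i2, hKdiff w hw w' hw']
      change _ - H (Γ w) * (fderiv ℝ Γ w (w' - w)) = _
      rw [real_linear_decomp (fderiv ℝ Γ w) (w' - w)]
      simp only [A, sub_re, sub_im]
      ring
    rw [e1]
    have b1 : ‖∫ t in w.re..w'.re, (A 1 (m (t, w'.im)) - A 1 w)‖ ≤ ε / 2 * |w'.re - w.re| :=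
      intervalIntegral.norm_integral_le_of_norm_le_const fun t ht =>
        (hδ' _ (hnear t w'.im (hu ht) le_rfl)).1.le
    have b2 : ‖∫ s in w.im..w'.im, (A I (m (w.re, s)) - A I w)‖ ≤ ε / 2 * |w'.im - w.im| :=
      intervalIntegral.norm_integral_le_of_norm_le_const fun t ht =>
        (hδ' _ (hnear w.re t (by simp) (hu ht))).2.le
    calc _ ≤ ε / 2 * |w'.re - w.re| + ε / 2 * |w'.im - w.im| := (norm_add_le _ _).trans (add_le_add b1 b2)
      _ ≤ ε / 2 * ‖w' - w‖ + ε / 2 * ‖w' - w‖ := by gcongr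
      _ = _ := by ring
  -- push the primitive forward
  let N : Set ℂ := e.target ∩ e.symm ⁻¹' Q
  have hN : IsOpen N := e.symm.isOpen_inter_preimage hQo
  have hpN : γ θ₀ ∈ N := by
    have h1 : e θ₀ = γ θ₀ := by rw [hec, hΓx]
    refine ⟨h1 ▸ e.map_source hθ, ?_⟩
    rw [mem_preimage, ← h1, e.left_inv hθ]; exact hQ0
  have hprim : ∀ z ∈ N, HasDerivAt (fun z => K (e.symm z)) (H z) z := by
    intro z hz
    have hΓz : Γ (e.symm z) = z := by rw [← hec]; exact e.right_inv hz.1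
    have hs := ((hsymm.contDiffAt (e.open_target.mem_nhds hz.1)).differentiableAt (by norm_num)).hasFDerivAt
    have h1 := (hKd _ hz.2).comp z hs
    have h2 : HasFDerivAt (fun z => Γ (e.symm z)) (fderiv ℝ Γ (e.symm z) ∘L fderiv ℝ e.symm z) z :=
      (hΓd _).hasFDerivAt.comp z hs
    have h3 : HasFDerivAt (fun z => Γ (e.symm z)) (ContinuousLinearMap.id ℝ ℂ) z := by
      refine (hasFDerivAt_id z).congr_of_eventuallyEq ?_
      filter_upwards [e.open_target.mem_nhds hz.1] with y hy
      rw [← hec]; exact e.right_inv hy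
    have h4 := h2.unique h3
    rw [hasDerivAt_iff_hasFDerivAt]
    refine hasFDerivAt_of_restrictScalars ℝ h1 ?_
    ext u
    have h5 : fderiv ℝ Γ (e.symm z) (fderiv ℝ e.symm z u) = u := by
      have := congrArg (fun L : ℂ →L[ℝ] ℂ => L u) h4
      exact this
    change _ = H (Γ (e.symm z)) * fderiv ℝ Γ (e.symm z) (fderiv ℝ e.symm z u)
    rw [h5, hΓz]
    simp [mul_comm]
  have hD : DifferentiableOn ℂ (fun z => K (e.symm z)) N := fun z hz =>
    (hprim z hz).differentiableAt.differentiableWithinAt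
  have hD' := hD.deriv hN
  have hD2 : DifferentiableOn ℂ H N := hD'.congr fun z hz => (hprim z hz).deriv.symm
  exact hD2.differentiableAt (hN.mem_nhds hpN)


open MeasureTheory in
lemma locallyIntegrable_inv : LocallyIntegrable (fun w : ℂ => w⁻¹) volume := by
  have key : ∀ R : ℝ, IntegrableOn (fun w : ℂ => w⁻¹) (Metric.ball 0 R) volume := by
    intro R
    have h : IntegrableOn (fun w : ℂ => (fun t : ℝ => t⁻¹) ‖w‖) (Metric.ball 0 R) volume := by
      rw [integrableOn_fun_norm_addHaar]
      simp only [Complex.finrank_real_complex]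
      refine IntegrableOn.congr_fun (f := fun _ => (1:ℝ)) (by simp) ?_ measurableSet_Ioo
      intro t ht
      have : t ≠ 0 := ht.1.ne'
      simp [this]
    refine Integrable.mono h (by fun_prop) ?_
    filter_upwards with w
    simp
  intro x
  exact ⟨Metric.ball 0 (‖x‖ + 1), Metric.isOpen_ball.mem_nhds (by simp), key _⟩

open MeasureTheory in
lemma integral_dbar_div {g : ℂ → ℂ} (hg : ContDiff ℝ (⊤ : ℕ∞) g) (hs : HasCompactSupport g) :
    ∫ w, w⁻¹ * dbar g w = - (2 * π * g 0) := by
  obtain ⟨R, hR0, hR⟩ : ∃ R : ℝ, 0 < R ∧ ∀ w : ℂ, R ≤ ‖w‖ → w ∉ tsupport g := by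
    obtain ⟨R, hR⟩ := hs.isCompact.isBounded.subset_ball (0:ℂ)
    refine ⟨max R 1, by positivity, fun w hw hw' => ?_⟩
    have := hR hw'
    rw [Metric.mem_ball, dist_zero_right] at this
    have := le_max_left R 1
    linarith
  have hg0 : ∀ w : ℂ, R ≤ ‖w‖ → g w = 0 := fun w hw => image_eq_zero_of_notMem_tsupport (hR w hw)
  have hDg0 : ∀ w : ℂ, R ≤ ‖w‖ → fderiv ℝ g w = 0 := fun w hw => by
    have : w ∉ tsupport (fderiv ℝ g) := fun h => hR w hw (tsupport_fderiv_subset ℝ h)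
    exact image_eq_zero_of_notMem_tsupport this
  have hgd : Differentiable ℝ g := hg.differentiable (by norm_num)
  have hDc : Continuous (fderiv ℝ g) := hg.continuous_fderiv (by norm_num)
  let u : ℝ → ℂ := fun θ => Real.cos θ + Real.sin θ * I
  have huc : Continuous u := by fun_prop
  have hun : ∀ θ, ‖u θ‖ = 1 := fun θ => by
    simp only [u, ofReal_cos, ofReal_sin, norm_cos_add_sin_mul_I]
  have hu0 : ∀ θ, u θ ≠ 0 := fun θ h => by have := hun θ; rw [h] at this; simp at this
  have hud : ∀ θ, HasDerivAt u (I * u θ) θ := fun θ => by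
    have h1 := (Real.hasDerivAt_cos θ).ofReal_comp
    have h2 := ((Real.hasDerivAt_sin θ).ofReal_comp).mul_const I
    refine (h1.add h2).congr_deriv ?_
    simp only [u]; push_cast; linear_combination -(Complex.sin θ * I_sq)
  let P1 : ℝ × ℝ → ℂ := fun q => fderiv ℝ g (q.1 * u q.2) (u q.2)
  let P2 : ℝ × ℝ → ℂ := fun q => fderiv ℝ g (q.1 * u q.2) (I * u q.2)
  have hP1 : Continuous P1 := by
    refine Continuous.clm_apply (hDc.comp (by fun_prop)) (by fun_prop)
  have hP2 : Continuous P2 := by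
    refine Continuous.clm_apply (hDc.comp (by fun_prop)) (by fun_prop)
  have hnorm : ∀ (r θ : ℝ), 0 ≤ r → ‖(r : ℂ) * u θ‖ = r := fun r θ hr => by
    rw [norm_mul, hun, mul_one, norm_real, Real.norm_of_nonneg hr]
  rw [← Complex.integral_comp_polarCoord_symm]
  have e1 : ∀ p ∈ polarCoord.target, p.1 • ((Complex.polarCoord.symm p)⁻¹ * dbar g (Complex.polarCoord.symm p))
      = P1 p + I * P2 p := by
    rintro ⟨r, θ⟩ ⟨hr, -⟩
    have hr : (r:ℂ) ≠ 0 := by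
      have : (0:ℝ) < r := hr
      exact_mod_cast this.ne'
    have : Complex.polarCoord.symm (r, θ) = r * u θ := by simp [u]
    rw [this]
    simp only [P1, P2, dbar]
    rw [real_linear_decomp _ (u θ), real_linear_decomp _ (I * u θ), real_smul]
    have hre : (u θ).re = Real.cos θ := by simp [u, -ofReal_cos, -ofReal_sin]
    have him : (u θ).im = Real.sin θ := by simp [u, -ofReal_cos, -ofReal_sin]
    have hre' : (I * u θ).re = -Real.sin θ := by simp [him]
    have him' : (I * u θ).im = Real.cos θ := by simp [hre]
    rw [hre, him, hre', him']
    have hinv : (u θ)⁻¹ = Real.cos θ - Real.sin θ * I := by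
      rw [inv_eq_iff_eq_inv, eq_comm, inv_eq_iff_eq_inv]
      refine (eq_inv_of_mul_eq_one_left ?_)
      have := Complex.cos_sq_add_sin_sq (θ : ℂ)
      simp only [u]; push_cast
      linear_combination this - Complex.sin θ ^ 2 * I_sq
    rw [mul_inv, hinv]
    field_simp
    push_cast
    linear_combination (-(Complex.sin θ * fderiv ℝ g (r * u θ) I)) * I_sq
  have htgt : polarCoord.target = Ioi (0:ℝ) ×ˢ Ioo (-π) π := rfl
  rw [setIntegral_congr_fun polarCoord.open_target.measurableSet e1, htgt]
  have hsub : Ioo (0:ℝ) R ×ˢ Ioo (-π) π ⊆ Ioi (0:ℝ) ×ˢ Ioo (-π) π :=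
    prod_mono Ioo_subset_Ioi_self le_rfl
  have e2 : ∫ p in Ioi (0:ℝ) ×ˢ Ioo (-π) π, (P1 p + I * P2 p) =
      ∫ p in Ioo (0:ℝ) R ×ˢ Ioo (-π) π, (P1 p + I * P2 p) := by
    refine setIntegral_eq_of_subset_of_forall_sdiff_eq_zero
      (measurableSet_Ioi.prod measurableSet_Ioo) hsub ?_
    rintro ⟨r, θ⟩ ⟨⟨h1, h2⟩, h3⟩
    have h1 : (0:ℝ) < r := h1
    have hrR : R ≤ r := by
      by_contra! h
      exact h3 ⟨⟨h1, h⟩, h2⟩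
    have : fderiv ℝ g (r * u θ) = 0 := hDg0 _ (by rw [hnorm r θ h1.le]; exact hrR)
    simp only [P1, P2, this]; simp
  rw [e2]
  have hint : ∀ P : ℝ × ℝ → ℂ, Continuous P → IntegrableOn P (Ioo (0:ℝ) R ×ˢ Ioo (-π) π) volume := by
    intro P hP
    refine (hP.continuousOn.integrableOn_compact (isCompact_Icc.prod isCompact_Icc)).mono_set
      (prod_mono Ioo_subset_Icc_self Ioo_subset_Icc_self)
  rw [integral_add (hint P1 hP1) ((hint P2 hP2).const_mul I), integral_const_mul]
  have hr0 : ∀ θ, ∫ r in Ioo (0:ℝ) R, P1 (r, θ) = - g 0 := by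
    intro θ
    rw [← integral_Ioc_eq_integral_Ioo, ← intervalIntegral.integral_of_le hR0.le,
      intervalIntegral.integral_eq_sub_of_hasDerivAt (f := fun r : ℝ => g (r * u θ))]
    · rw [hg0 (R * u θ) (by rw [hnorm R θ hR0.le])]; simp
    · intro r _
      have h1 : HasDerivAt (fun r : ℝ => (r : ℂ) * u θ) (u θ) r := by
        simpa using (hasDerivAt_id r).ofReal_comp.mul_const (u θ)
      exact (hgd _).hasFDerivAt.comp_hasDerivAt r h1
    · exact (hP1.comp (by fun_prop)).intervalIntegrable _ _
  have hθ0 : ∀ r ∈ Ioo (0:ℝ) R, ∫ θ in Ioo (-π) π, P2 (r, θ) = 0 := by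
    intro r hr
    have hrne : (r:ℂ) ≠ 0 := by exact_mod_cast hr.1.ne'
    rw [← integral_Ioc_eq_integral_Ioo, ← intervalIntegral.integral_of_le (by linarith [Real.pi_pos]),
      intervalIntegral.integral_eq_sub_of_hasDerivAt (f := fun θ : ℝ => (r:ℂ)⁻¹ * g (r * u θ))]
    · simp [u]
    · intro θ _
      have h1 : HasDerivAt (fun θ : ℝ => (r : ℂ) * u θ) (r * (I * u θ)) θ := (hud θ).const_mul _
      have h2 := ((hgd _).hasFDerivAt.comp_hasDerivAt θ h1).const_mul (r:ℂ)⁻¹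
      refine h2.congr_deriv ?_
      change _ = fderiv ℝ g (r * u θ) (I * u θ)
      rw [← real_smul (x := r) (z := I * u θ), map_smul, real_smul, inv_mul_cancel_left₀ hrne]
    · exact (hP2.comp (by fun_prop)).intervalIntegrable _ _
  have i2 : ∫ p in Ioo (0:ℝ) R ×ˢ Ioo (-π) π, P2 p = 0 := by
    rw [Measure.volume_eq_prod, setIntegral_prod _ (hint P2 hP2), setIntegral_congr_fun measurableSet_Ioo hθ0]
    simp
  have i1 : ∫ p in Ioo (0:ℝ) R ×ˢ Ioo (-π) π, P1 p = - (2 * π * g 0) := by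
    have hh := hint P1 hP1
    rw [Measure.volume_eq_prod, setIntegral_prod _ hh, integral_integral_swap]
    · simp only [hr0]
      rw [setIntegral_const, Measure.real, Real.volume_Ioo,
        ENNReal.toReal_ofReal (by linarith [Real.pi_pos]), real_smul]
      push_cast; ring
    · rw [Measure.prod_restrict]; exact hh
  rw [i1, i2]; simp

open MeasureTheory in
lemma exists_dbar_solution {μ : ℂ → ℂ} (hμ : ContDiff ℝ (⊤ : ℕ∞) μ) (hs : HasCompactSupport μ) :
    ∃ v : ℂ → ℂ, ContDiff ℝ (⊤ : ℕ∞) v ∧ ∀ z, dbar v z = μ z := by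
  let L : ℂ →L[ℝ] ℂ →L[ℝ] ℂ := ContinuousLinearMap.mul ℝ ℂ
  let k : ℂ → ℂ := fun w => w⁻¹
  let v0 : ℂ → ℂ := convolution k μ L volume
  have hv0 : ContDiff ℝ (⊤ : ℕ∞) v0 := hs.contDiff_convolution_right L locallyIntegrable_inv hμ
  have hd0 : ∀ z, dbar v0 z = 2 * π * μ z := by
    intro z
    have h1 := hs.hasFDerivAt_convolution_right L locallyIntegrable_inv (hμ.of_le (by exact_mod_cast le_top)) z
    have hDc : Continuous (fderiv ℝ μ) := hμ.continuous_fderiv (by norm_num)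
    have h2 := fun x => convolution_precompR_apply L (μ := volume) locallyIntegrable_inv (hs.fderiv ℝ) hDc z x
    have hex : ∀ x, Integrable (fun t : ℂ => t⁻¹ * (fderiv ℝ μ (z - t)) x) volume := fun x =>
      (HasCompactSupport.convolutionExists_right L (f := fun w : ℂ => w⁻¹) (g := fun a => fderiv ℝ μ a x)
        ((hs.fderiv_apply ℝ x)) locallyIntegrable_inv (by fun_prop) z : _)
    rw [dbar, h1.fderiv, h2, h2]
    change (∫ t : ℂ, t⁻¹ * (fderiv ℝ μ (z - t)) 1) + I * (∫ t : ℂ, t⁻¹ * (fderiv ℝ μ (z - t)) I) = _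
    rw [← integral_const_mul, ← integral_add (hex 1) ((hex I).const_mul I)]
    have hg : ContDiff ℝ (⊤ : ℕ∞) (fun w => μ (z - w)) := hμ.comp (contDiff_const.sub contDiff_id)
    have hgs : HasCompactSupport (fun w => μ (z - w)) := hs.comp_homeomorph (Homeomorph.subLeft z)
    have key := integral_dbar_div hg hgs
    have hfd : ∀ w v, fderiv ℝ (fun w => μ (z - w)) w v = - fderiv ℝ μ (z - w) v := by
      intro w v
      have hh : HasFDerivAt (fun w => μ (z - w)) _ w :=
        ((hμ.differentiable (by norm_num)) (z - w)).hasFDerivAt.comp w ((hasFDerivAt_id w).const_sub z)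
      rw [hh.fderiv]; simp
    rw [show (2 * π * μ z : ℂ) = - (-(2 * π * μ (z - 0))) by simp, ← key, ← integral_neg]
    congr 1; ext t
    simp only [dbar, hfd]; ring
  refine ⟨fun z => (2 * π : ℂ)⁻¹ * v0 z, contDiff_const.mul hv0, fun z => ?_⟩
  have hh := ((hv0.differentiable (by norm_num)) z).hasFDerivAt.const_mul (2 * π : ℂ)⁻¹
  have : dbar (fun z => (2 * π : ℂ)⁻¹ * v0 z) z = (2 * π : ℂ)⁻¹ * dbar v0 z := by
    simp only [dbar]
    rw [hh.fderiv]
    simp; ring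
  rw [this, hd0, inv_mul_cancel_left₀]
  have := Real.pi_ne_zero
  simp [this]


lemma differentiableAt_of_dbar_eq_zero {φ : ℂ → ℂ} {z : ℂ} (hd : DifferentiableAt ℝ φ z)
    (h : dbar φ z = 0) : DifferentiableAt ℂ φ z := by
  have h1 : HasFDerivAt φ (ContinuousLinearMap.toSpanSingleton ℂ (fderiv ℝ φ z 1)) z := by
    refine hasFDerivAt_of_restrictScalars ℝ hd.hasFDerivAt ?_
    ext u
    rw [fderiv_of_dbar_eq_zero h u]
    simp
  exact h1.differentiableAt

lemma differentiableAt_sub_of_dbar {h ψ v μ : ℂ → ℂ} {z : ℂ} (hv : DifferentiableAt ℝ v z)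
    (hvμ : dbar v z = μ z) (he : h =ᶠ[𝓝 z] ψ) (hψ : DifferentiableAt ℝ ψ z)
    (hd : dbar ψ z = μ z) : DifferentiableAt ℂ (fun w => h w - v w) z := by
  have h1 : (fun w => h w - v w) =ᶠ[𝓝 z] fun w => ψ w - v w := by
    filter_upwards [he] with w hw
    rw [hw]
  refine DifferentiableAt.congr_of_eventuallyEq ?_ h1
  apply differentiableAt_of_dbar_eq_zero (hψ.sub hv)
  have h2 : HasFDerivAt (ψ - v) (fderiv ℝ ψ z - fderiv ℝ v z) z :=
    hψ.hasFDerivAt.sub hv.hasFDerivAt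
  rw [dbar] at hvμ hd ⊢
  rw [h2.fderiv]
  simp only [ContinuousLinearMap.sub_apply]
  linear_combination hd - hvμ

lemma isClosed_range_of_periodic {γ : ℝ → ℂ} (hγ : ContDiff ℝ (⊤ : ℕ∞) γ)
    (hper : ∀ θ, γ (θ + 2 * π) = γ θ) : IsClosed (range γ) := by
  have h : Function.Periodic γ (2 * π) := hper
  rw [← h.image_Icc (by positivity) 0]
  exact (isCompact_Icc.image hγ.continuous).isClosed

lemma flatAt_bump_mul {p : ℂ} (χ : ContDiffBump p) {U : Set ℂ}
    (hb : Metric.closedBall p χ.rOut ⊆ U) {q : ℂ → ℂ} {z : ℂ} (h : z ∈ U → FlatAt q z) :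
    FlatAt (fun w => (χ w : ℂ) * q w) z := by
  by_cases hz : z ∈ Metric.closedBall p χ.rOut
  · intro N
    refine IsBigO.trans ?_ (h (hb hz) N)
    refine IsBigO.of_bound 1 (Eventually.of_forall fun w => ?_)
    rw [norm_mul, norm_real, Real.norm_of_nonneg χ.nonneg]
    gcongr
    exact χ.le_one
  · intro N
    have : (fun w => (χ w : ℂ) * q w) =ᶠ[𝓝 z] fun _ => 0 := by
      filter_upwards [Metric.isClosed_closedBall.isOpen_compl.mem_nhds hz] with w hw
      rw [mem_compl_iff, Metric.mem_closedBall, not_le] at hw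
      rw [χ.zero_of_le_dist hw.le]; simp
    exact this.trans_isBigO (isBigO_zero _ _)

open Classical in
lemma exists_local_smooth {γi γo : ℝ → ℂ}
    (hγi : ContDiff ℝ (⊤ : ℕ∞) γi) (hγo : ContDiff ℝ (⊤ : ℕ∞) γo)
    (hperi : ∀ θ, γi (θ + 2 * π) = γi θ) (hpero : ∀ θ, γo (θ + 2 * π) = γo θ)
    (hinji : InjOn γi (Ico 0 (2 * π))) (hinjo : InjOn γo (Ico 0 (2 * π)))
    (hderi : ∀ θ, deriv γi θ ≠ 0) (hdero : ∀ θ, deriv γo θ ≠ 0)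
    {A Uo Bi : Set ℂ} (hUo : IsOpen Uo) (hBi : IsOpen Bi) (hdisj : Disjoint Uo Bi)
    (hA : ∀ z, z ∈ A ↔ z ∉ Uo ∧ z ∉ Bi)
    (hfro : frontier Uo ⊆ range γo) (hfri : frontier Bi ⊆ range γi)
    {f : ℂ → ℂ} (hf_cont : ContinuousOn f A) (hf_holo : DifferentiableOn ℂ f (interior A))
    (hf_in : ContDiff ℝ (⊤ : ℕ∞) (fun θ : ℝ => f (γi θ)))
    (hf_out : ContDiff ℝ (⊤ : ℕ∞) (fun θ : ℝ => f (γo θ))) (p : ℂ) :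
    ∃ V : Set ℂ, IsOpen V ∧ p ∈ V ∧ ∃ g : ℂ → ℂ, ContDiffOn ℝ (⊤ : ℕ∞) g V ∧
      ∀ z ∈ V, z ∈ A → g z = f z := by
  have hcli := isClosed_range_of_periodic hγi hperi
  have hclo := isClosed_range_of_periodic hγo hpero
  obtain ⟨φi, Wi, hφi, hWi, hpi, hWφi⟩ :=
    exists_local_extension hγi hperi hinji hderi f hf_in hcli p
  obtain ⟨φo, Wo, hφo, hWo, hpo, hWφo⟩ :=
    exists_local_extension hγo hpero hinjo hdero f hf_out hclo p
  obtain ⟨R, hR, hball⟩ := Metric.nhds_basis_closedBall.mem_iff.1 ((hWi.inter hWo).mem_nhds ⟨hpi, hpo⟩)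
  let χ : ContDiffBump p := ⟨R / 2, R, by positivity, by linarith⟩
  have hbi : Metric.closedBall p χ.rOut ⊆ Wi := fun z hz => (hball hz).1
  have hbo : Metric.closedBall p χ.rOut ⊆ Wo := fun z hz => (hball hz).2
  let qi : ℂ → ℂ := fun w => (χ w : ℂ) * dbar φi w
  let qo : ℂ → ℂ := fun w => (χ w : ℂ) * dbar φo w
  have hqi : ContDiff ℝ (⊤ : ℕ∞) qi := contDiff_bump_mul χ isOpen_univ (subset_univ _) (dbar_contDiff hφi).contDiffOn
  have hqo : ContDiff ℝ (⊤ : ℕ∞) qo := contDiff_bump_mul χ isOpen_univ (subset_univ _) (dbar_contDiff hφo).contDiffOn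
  have hmi := contDiff_indicator_of_flat Bi qi hqi fun z hz =>
    flatAt_bump_mul χ hbi fun hzW => (hWφi z hzW (hfri hz)).2
  have hmo := contDiff_indicator_of_flat Uo qo hqo fun z hz =>
    flatAt_bump_mul χ hbo fun hzW => (hWφo z hzW (hfro hz)).2
  let μ : ℂ → ℂ := fun z => Uo.indicator qo z + Bi.indicator qi z
  have hμ : ContDiff ℝ (⊤ : ℕ∞) μ := hmo.add hmi
  have hμs : HasCompactSupport μ := by
    refine HasCompactSupport.intro (isCompact_closedBall p R) fun z hz => ?_
    rw [Metric.mem_closedBall, not_le] at hz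
    have h0 : χ z = 0 := χ.zero_of_le_dist hz.le
    have h1 : qo z = 0 := by simp [qo, h0]
    have h2 : qi z = 0 := by simp [qi, h0]
    simp [μ, indicator, h1, h2]
  obtain ⟨v, hv, hvμ⟩ := exists_dbar_solution hμ hμs
  have hvd : Differentiable ℝ v := hv.differentiable (by norm_num)
  let h : ℂ → ℂ := fun z => if z ∈ Uo then φo z else if z ∈ Bi then φi z else f z
  have hdisj' : ∀ z, z ∈ Bi → z ∉ Uo := fun z h1 h2 => disjoint_left.1 hdisj h2 h1
  have hhU : ∀ z ∈ Uo, h z = φo z := fun z hz => by simp only [h, if_pos hz]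
  have hhB : ∀ z ∈ Bi, h z = φi z := fun z hz => by
    simp only [h, if_neg (hdisj' z hz), if_pos hz]
  have hhA : ∀ z ∈ A, h z = f z := fun z hz => by
    simp only [h, if_neg ((hA z).1 hz).1, if_neg ((hA z).1 hz).2]
  have hUe : ∀ z ∈ Uo, h =ᶠ[𝓝 z] φo := fun z hz => by
    filter_upwards [hUo.mem_nhds hz] with w hw using hhU w hw
  have hBe : ∀ z ∈ Bi, h =ᶠ[𝓝 z] φi := fun z hz => by
    filter_upwards [hBi.mem_nhds hz] with w hw using hhB w hw
  let B : Set ℂ := Metric.ball p (R / 2)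
  have hB : IsOpen B := Metric.isOpen_ball
  have hBR : B ⊆ Metric.closedBall p R := by
    refine Metric.ball_subset_closedBall.trans (Metric.closedBall_subset_closedBall (by linarith))
  have hχ1 : ∀ z ∈ B, χ z = 1 := fun z hz => χ.one_of_mem_closedBall (Metric.ball_subset_closedBall hz)
  have hcont : ContinuousOn h B := by
    intro z hz
    refine ContinuousAt.continuousWithinAt ?_
    by_cases hzU : z ∈ Uo
    · exact hφo.continuous.continuousAt.congr (hUe z hzU).symm
    by_cases hzB : z ∈ Bi
    · exact hφi.continuous.continuousAt.congr (hBe z hzB).symm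
    have hzA : z ∈ A := (hA z).2 ⟨hzU, hzB⟩
    have cA : ContinuousWithinAt h A z := (hf_cont z hzA).congr hhA (hhA z hzA)
    have cU : ContinuousWithinAt h Uo z := by
      by_cases hc : z ∈ closure Uo
      · have hfr : z ∈ frontier Uo := by rw [hUo.frontier_eq]; exact ⟨hc, hzU⟩
        refine hφo.continuous.continuousWithinAt.congr hhU ?_
        rw [hhA z hzA, (hWφo z (hbo (hBR hz)) (hfro hfr)).1]
      · exact continuousWithinAt_of_notMem_closure hc
    have cB : ContinuousWithinAt h Bi z := by
      by_cases hc : z ∈ closure Bi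
      · have hfr : z ∈ frontier Bi := by rw [hBi.frontier_eq]; exact ⟨hc, hzB⟩
        refine hφi.continuous.continuousWithinAt.congr hhB ?_
        rw [hhA z hzA, (hWφi z (hbi (hBR hz)) (hfri hfr)).1]
      · exact continuousWithinAt_of_notMem_closure hc
    have := (cA.union cU).union cB
    have huniv : A ∪ Uo ∪ Bi = univ := by
      ext w; simp only [mem_union, mem_univ, iff_true, hA w]; tauto
    rwa [huniv, continuousWithinAt_univ] at this
  have hHc : ContinuousOn (fun w => h w - v w) B := hcont.sub hv.continuous.continuousOn
  have hHd : ∀ z ∈ B, z ∉ range γi → z ∉ range γo → DifferentiableAt ℂ (fun w => h w - v w) z := by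
    intro z hz hzi hzo
    by_cases hzU : z ∈ Uo
    · refine differentiableAt_sub_of_dbar (hvd z) (hvμ z) (hUe z hzU) (hφo.differentiable (by norm_num) z) ?_
      have : z ∉ Bi := fun hb => hdisj' z hb hzU
      simp [μ, hzU, this, qo, hχ1 z hz]
    by_cases hzB : z ∈ Bi
    · refine differentiableAt_sub_of_dbar (hvd z) (hvμ z) (hBe z hzB) (hφi.differentiable (by norm_num) z) ?_
      simp [μ, hzU, hzB, qi, hχ1 z hz]
    have hcU : z ∉ closure Uo := fun hc => hzo (hfro (by rw [hUo.frontier_eq]; exact ⟨hc, hzU⟩))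
    have hcB : z ∉ closure Bi := fun hc => hzi (hfri (by rw [hBi.frontier_eq]; exact ⟨hc, hzB⟩))
    have hint : z ∈ interior A := by
      rw [mem_interior_iff_mem_nhds]
      filter_upwards [isClosed_closure.isOpen_compl.mem_nhds hcU,
        isClosed_closure.isOpen_compl.mem_nhds hcB] with w h1 h2
      exact (hA w).2 ⟨fun h3 => h1 (subset_closure h3), fun h3 => h2 (subset_closure h3)⟩
    have hfd : DifferentiableAt ℂ f z := hf_holo.differentiableAt (isOpen_interior.mem_nhds hint)
    refine differentiableAt_sub_of_dbar (ψ := f) (hvd z) (hvμ z) ?_ (hfd.restrictScalars ℝ) ?_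
    · filter_upwards [isOpen_interior.mem_nhds hint] with w hw using hhA w (interior_subset hw)
    · rw [dbar_eq_zero hfd]
      simp [μ, hzU, hzB]
  have step1 := removable_curve hγo hpero hinjo hdero (hB.inter hcli.isOpen_compl)
    (hHc.mono inter_subset_left) (fun z hz hzo => hHd z hz.1 hz.2 hzo)
  have step2 := removable_curve hγi hperi hinji hderi hB hHc (fun z hz hzi => step1 z ⟨hz, hzi⟩)
  have hHD : DifferentiableOn ℂ (fun w => h w - v w) B := fun z hz => (step2 z hz).differentiableWithinAt
  have hHs : ContDiffOn ℝ (⊤ : ℕ∞) (fun w => h w - v w) B := (hHD.contDiffOn hB).restrict_scalars ℝ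
  refine ⟨B, hB, Metric.mem_ball_self (by positivity), h, ?_, fun z _ hz => hhA z hz⟩
  refine (hHs.add hv.contDiffOn).congr fun z _ => ?_
  simp

open Manifold in
open Classical in
lemma glue_local {A : Set ℂ} {f : ℂ → ℂ} (H : ∀ p, ∃ V : Set ℂ, IsOpen V ∧ p ∈ V ∧ ∃ g : ℂ → ℂ,
    ContDiffOn ℝ (⊤ : ℕ∞) g V ∧ ∀ z ∈ V, z ∈ A → g z = f z) :
    ∃ F : ℂ → ℂ, ContDiff ℝ (⊤ : ℕ∞) F ∧ EqOn F f A := by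
  obtain ⟨g, hg⟩ := exists_contMDiffMap_forall_mem_convex_of_local (n := (⊤ : ℕ∞)) (I := 𝓘(ℝ, ℂ)) (M := ℂ) (F := ℂ)
    (t := fun x => if x ∈ A then {f x} else univ) (by
      intro x
      split_ifs
      · exact convex_singleton _
      · exact convex_univ) (by
      intro p
      obtain ⟨V, hV, hp, g, hg, hgf⟩ := H p
      refine ⟨V, hV.mem_nhds hp, g, hg.contMDiffOn, fun y hy => ?_⟩
      split_ifs with h
      · exact hgf y hy h
      · trivial)
  refine ⟨g, contMDiff_iff_contDiff.1 g.contMDiff, fun x hx => ?_⟩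
  have := hg x
  rw [if_pos hx] at this
  exact this

end Helpers

theorem holomorphic_function_on_annulus_extends_smoothly
    (γin γout : ℝ → ℂ) (Bin Bout : Set ℂ)
    (hγin_smooth : ContDiff ℝ (⊤ : ℕ∞) γin)
    (hγout_smooth : ContDiff ℝ (⊤ : ℕ∞) γout)
    (hγin_per : ∀ θ, γin (θ + 2 * π) = γin θ)
    (hγout_per : ∀ θ, γout (θ + 2 * π) = γout θ)
    (hγin_inj : InjOn γin (Ico 0 (2 * π)))
    (hγout_inj : InjOn γout (Ico 0 (2 * π)))
    (hγin_deriv : ∀ θ, deriv γin θ ≠ 0)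
    (hγout_deriv : ∀ θ, deriv γout θ ≠ 0)
    (hBin_conn : IsConnected Bin) (hBin_open : IsOpen Bin)
    (hBin_bdd : Bornology.IsBounded Bin)
    (hin_two : ∃ U : Set ℂ, IsConnected U ∧ IsOpen U ∧ ¬ Bornology.IsBounded U ∧
      Disjoint Bin U ∧ Bin ∪ U = (range γin)ᶜ)
    (hBin_cl : closure Bin = Bin ∪ range γin)
    (hBout_conn : IsConnected Bout) (hBout_open : IsOpen Bout)
    (hBout_bdd : Bornology.IsBounded Bout)
    (hout_two : ∃ U : Set ℂ, IsConnected U ∧ IsOpen U ∧ ¬ Bornology.IsBounded U ∧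
      Disjoint Bout U ∧ Bout ∪ U = (range γout)ᶜ)
    (hBout_cl : closure Bout = Bout ∪ range γout)
    (hwind_in : ∀ z ∈ Bin,
      (2 * π * I)⁻¹ * ∫ θ in (0:ℝ)..(2 * π), deriv γin θ / (γin θ - z) = 1)
    (hwind_out : ∀ z ∈ Bout,
      (2 * π * I)⁻¹ * ∫ θ in (0:ℝ)..(2 * π), deriv γout θ / (γout θ - z) = 1)
    (hsub : Bin ∪ range γin ⊆ Bout ∪ range γout)
    (A : Set ℂ) (hA : A = (Bout ∪ range γout) \ Bin)
    (f : ℂ → ℂ)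
    (hf_cont : ContinuousOn f A)
    (hf_holo : DifferentiableOn ℂ f (interior A))
    (hf_in : ContDiff ℝ (⊤ : ℕ∞) (fun θ : ℝ => f (γin θ)))
    (hf_out : ContDiff ℝ (⊤ : ℕ∞) (fun θ : ℝ => f (γout θ))) :
    ∃ F : ℂ → ℂ, ContDiff ℝ (⊤ : ℕ∞) F ∧ EqOn F f A := by
  clear hwind_in hwind_out
  obtain ⟨Uo, -, hUo, -, hUdisj, hUun⟩ := hout_two
  obtain ⟨Ui, -, -, -, -, hIun⟩ := hin_two
  have hUo_iff : ∀ z, z ∈ Uo ↔ z ∉ Bout ∧ z ∉ range γout := by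
    intro z
    have h1 : z ∈ Bout ∪ Uo ↔ z ∈ (range γout)ᶜ := by rw [hUun]
    have h2 : z ∈ Bout → z ∉ Uo := fun h => disjoint_left.1 hUdisj h
    rw [mem_union, mem_compl_iff] at h1
    tauto
  have hfro : frontier Uo ⊆ range γout := by
    rw [hUo.frontier_eq]
    rintro z ⟨hz, hzU⟩
    by_contra hzr
    have hzB : z ∈ Bout := by
      by_contra h
      exact hzU ((hUo_iff z).2 ⟨h, hzr⟩)
    obtain ⟨w, hw1, hw2⟩ := mem_closure_iff.1 hz Bout hBout_open hzB
    exact disjoint_left.1 hUdisj hw1 hw2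
  have hfri : frontier Bin ⊆ range γin := by
    rw [hBin_open.frontier_eq, hBin_cl]
    rintro z ⟨hz | hz, hzB⟩
    · exact absurd hz hzB
    · exact hz
  have hdisj : Disjoint Uo Bin := by
    rw [disjoint_left]
    intro z hz hzB
    have := hsub (Or.inl hzB)
    have h2 := (hUo_iff z).1 hz
    rcases this with h | h
    · exact h2.1 h
    · exact h2.2 h
  have hAiff : ∀ z, z ∈ A ↔ z ∉ Uo ∧ z ∉ Bin := by
    intro z
    rw [hA, mem_diff, mem_union, hUo_iff]
    tauto
  exact glue_local fun p => exists_local_smooth hγin_smooth hγout_smooth hγin_per hγout_per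
    hγin_inj hγout_inj hγin_deriv hγout_deriv hUo hBin_open hdisj hAiff hfro hfri hf_cont hf_holo
    hf_in hf_out p
end

section
/- Let h be a framing datum with image A = h(ℝ × [0,1]), and assume the topological frontier of A in ℂ is contained in h(ℝ × {0}) ∪ h(ℝ × {1}). Let g : A → ℂ be continuous, complex-differentiable at every point of the interior of A, and such that θ ↦ g(h(θ,0)) and θ ↦ g(h(θ,1)) are infinitely differentiable. Then ∫₀^{2π} g(h(θ,0)) · (∂h/∂θ)(θ,0) dθ = ∫₀^{2π} g(h(θ,1)) · (∂h/∂θ)(θ,1) dθ. (Cauchy's theorem for annuli with thin parts: the integral of a holomorphic 1-form over the incoming boundary equals its integral over the outgoing boundary.) -/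
open Set Complex Real
open Filter Topology

lemma good_deriv (g : ℂ → ℂ) (hg : Continuous g) (U : Set ℂ) (hUo : IsOpen U)
    (hU : DifferentiableOn ℂ g U) (c q : ℝ → ℂ) (c' q' : ℂ) (x : ℝ)
    (hc : HasDerivAt c c' x) (hq : HasDerivAt q q' x) (s₀ s₁ : ℝ) (hs : s₀ ≤ s₁)
    (hin : ∀ s ∈ Icc s₀ s₁, c x + s * (q x - c x) ∈ U) :
    HasDerivAt (fun x => (∫ s in s₀..s₁, g (c x + s * (q x - c x))) * (q x - c x))
      (g (c x + s₁ * (q x - c x)) * (c' + s₁ * (q' - c'))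
        - g (c x + s₀ * (q x - c x)) * (c' + s₀ * (q' - c'))) x := by
  set p : ℝ → ℝ → ℂ := fun s x => c x + s * (q x - c x) with hp
  have hcomb : ∀ x, ∀ s ∈ Icc s₀ s₁, p s x ∈ segment ℝ (p s₀ x) (p s₁ x) := by
    intro x s hs'
    have h1 : s ∈ segment ℝ s₀ s₁ := by rw [segment_eq_Icc hs]; exact hs'
    obtain ⟨a, b, ha, hb, hab, rfl⟩ := h1
    refine ⟨a, b, ha, hb, hab, ?_⟩
    have : (a : ℂ) + b = 1 := by exact_mod_cast hab
    simp only [hp, smul_eq_mul, Complex.real_smul]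
    push_cast
    linear_combination (c x) * this
  have hseg : segment ℝ (p s₀ x) (p s₁ x) ⊆ U := by
    rintro z ⟨a, b, ha, hb, hab, rfl⟩
    have h1 : a * s₀ + b * s₁ ∈ Icc s₀ s₁ := by
      rw [← segment_eq_Icc hs]
      exact ⟨a, b, ha, hb, hab, rfl⟩
    have := hin _ h1
    convert this using 1
    have : (a : ℂ) + b = 1 := by exact_mod_cast hab
    simp only [hp, Complex.real_smul]
    push_cast
    linear_combination (c x) * this
  have hcpt : IsCompact (segment ℝ (p s₀ x) (p s₁ x)) := by
    rw [segment_eq_image_lineMap]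
    exact isCompact_Icc.image AffineMap.lineMap_continuous
  obtain ⟨δ, hδ, hsub⟩ := hcpt.exists_thickening_subset_open hUo hseg
  set W := Metric.thickening δ (segment ℝ (p s₀ x) (p s₁ x)) with hW
  have hWc : Convex ℝ W := (convex_segment _ _).thickening δ
  have hWo : IsOpen W := Metric.isOpen_thickening
  obtain ⟨Q, hQ⟩ := hWc.exists_forall_hasDerivWithinAt (hU.mono hsub)
  have hQ' : ∀ a ∈ W, HasDerivAt Q (g a) a := fun a ha => (hQ a ha).hasDerivAt (hWo.mem_nhds ha)
  have hpd : ∀ s, HasDerivAt (p s) (c' + s * (q' - c')) x := fun s =>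
    hc.add ((hq.sub hc).const_mul _)
  have hmem : ∀ s ∈ Icc s₀ s₁, p s x ∈ W := fun s hs' =>
    Metric.self_subset_thickening hδ _ (hcomb x s hs')
  have hl : s₀ ∈ Icc s₀ s₁ := ⟨le_rfl, hs⟩
  have hr : s₁ ∈ Icc s₀ s₁ := ⟨hs, le_rfl⟩
  have hev : ∀ᶠ y in 𝓝 x, p s₀ y ∈ W ∧ p s₁ y ∈ W :=
    ((hpd s₀).continuousAt.eventually (hWo.mem_nhds (hmem _ hl))).and
      ((hpd s₁).continuousAt.eventually (hWo.mem_nhds (hmem _ hr)))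
  have heq : (fun x => (∫ s in s₀..s₁, g (c x + s * (q x - c x))) * (q x - c x)) =ᶠ[𝓝 x]
      fun y => Q (p s₁ y) - Q (p s₀ y) := by
    filter_upwards [hev] with y hy
    rw [← intervalIntegral.integral_mul_const]
    refine intervalIntegral.integral_eq_sub_of_hasDerivAt (f := fun s => Q (p s y)) ?_ ?_
    · intro s hs'
      rw [uIcc_of_le hs] at hs'
      have h1 := hQ' _ (hWc.segment_subset hy.1 hy.2 (hcomb y s hs'))
      have h2 : HasDerivAt (fun s : ℝ => p s y) (q y - c y) s := by
        have := ((Complex.ofRealCLM.hasDerivAt (x := s)).mul_const (q y - c y)).const_add (c y)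
        simpa [hp] using this
      exact h1.comp s h2
    · exact Continuous.intervalIntegrable (by fun_prop) _ _
  refine HasDerivAt.congr_of_eventuallyEq ?_ heq
  exact ((hQ' _ (hmem _ hr)).comp x (hpd s₁)).sub ((hQ' _ (hmem _ hl)).comp x (hpd s₀))

lemma lemM (g : ℂ → ℂ) (hg : Continuous g) (U : Set ℂ) (hUo : IsOpen U)
    (hU : DifferentiableOn ℂ g U) (c q c' q' : ℝ → ℂ)
    (hc : ∀ x, HasDerivAt c (c' x) x) (hq : ∀ x, HasDerivAt q (q' x) x)
    (hc' : Continuous c') (hq' : Continuous q')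
    (hin : ∀ x, q x - c x ≠ 0 → ∀ s ∈ Ioo (0:ℝ) 1, c x + s * (q x - c x) ∈ U)
    (a b : ℝ) (hca : c a = c b) (hqa : q a = q b) :
    ∫ x in a..b, g (q x) * q' x = ∫ x in a..b, g (c x) * c' x := by
  have hcc : Continuous c := continuous_iff_continuousAt.2 fun x => (hc x).continuousAt
  have hqc : Continuous q := continuous_iff_continuousAt.2 fun x => (hq x).continuousAt
  set V : ℝ → ℝ → ℝ → ℂ := fun s₀ s₁ x =>
    (∫ s in s₀..s₁, g (c x + s * (q x - c x))) * (q x - c x) with hV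
  set K : ℝ → ℝ → ℂ := fun s x =>
    ∫ y in a..x, g (c y + s * (q y - c y)) * (c' y + s * (q' y - c' y)) with hK
  set Ψ : ℝ → ℝ → ℝ → ℂ := fun s₀ s₁ x => K s₁ x - K s₀ x - V s₀ s₁ x with hΨ
  have hKd : ∀ s x, HasDerivAt (K s)
      (g (c x + s * (q x - c x)) * (c' x + s * (q' x - c' x))) x := by
    intro s x
    have hcont : Continuous fun y => g (c y + s * (q y - c y)) * (c' y + s * (q' y - c' y)) := by
      fun_prop
    exact intervalIntegral.integral_hasDerivAt_right (hcont.intervalIntegrable _ _)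
      (hcont.stronglyMeasurableAtFilter _ _) hcont.continuousAt
  have hΨc : ∀ x, Continuous fun η : ℝ => Ψ η (1 - η) x := by
    intro x
    have hKc : Continuous fun s => K s x := by
      refine intervalIntegral.continuous_parametric_intervalIntegral_of_continuous' ?_ _ _
      simp only [Function.uncurry_def]
      fun_prop
    have hVc : Continuous fun η : ℝ => V η (1 - η) x := by
      refine Continuous.mul ?_ continuous_const
      have hcont : Continuous fun s : ℝ => g (c x + s * (q x - c x)) := by fun_prop
      have h1 : ∀ η : ℝ, ∫ s in η..(1 - η), g (c x + s * (q x - c x)) =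
          (∫ s in (0:ℝ)..(1 - η), g (c x + s * (q x - c x)))
            - ∫ s in (0:ℝ)..η, g (c x + s * (q x - c x)) := fun η =>
        (intervalIntegral.integral_interval_sub_left (hcont.intervalIntegrable _ _)
          (hcont.intervalIntegrable _ _)).symm
      have h2 : Continuous fun η : ℝ => ∫ s in (0:ℝ)..η, g (c x + s * (q x - c x)) :=
        intervalIntegral.continuous_primitive (fun _ _ => hcont.intervalIntegrable _ _) _
      simp_rw [h1]
      exact (h2.comp (by fun_prop : Continuous fun η : ℝ => 1 - η)).sub h2
    exact ((hKc.comp (by fun_prop : Continuous fun η : ℝ => 1 - η)).sub hKc).sub hVc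
  have hΨd : ∀ x, HasDerivAt (Ψ 0 1) 0 x := by
    intro x
    by_cases hx : q x - c x = 0
    · have hW : Continuous fun x => ∫ s in (0:ℝ)..1, g (c x + s * (q x - c x)) := by
        refine intervalIntegral.continuous_parametric_intervalIntegral_of_continuous' ?_ _ _
        simp only [Function.uncurry_def]
        fun_prop
      have hVd : HasDerivAt (V 0 1) (g (c x) * (q' x - c' x)) x := by
        have h1 := (hq x).sub (hc x)
        rw [hasDerivAt_iff_tendsto_slope] at h1 ⊢
        have h2 := (hW.tendsto x).mono_left (nhdsWithin_le_nhds (s := {x}ᶜ))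
        have h3 := h2.mul h1
        have h4 : (∫ s in (0:ℝ)..1, g (c x + s * (q x - c x))) = g (c x) := by
          simp [hx]
        rw [h4] at h3
        refine h3.congr fun y => ?_
        simp only [slope_def_module, hV, Pi.sub_apply, hx, mul_zero, sub_zero]
        simp only [Complex.real_smul]
        ring
      have := ((hKd 1 x).sub (hKd 0 x)).sub hVd
      refine this.congr_deriv ?_
      have : q x = c x := sub_eq_zero.1 hx
      simp [this]
      ring
    · have hopen : IsOpen {y | q y - c y ≠ 0} := isOpen_ne_fun (by fun_prop) continuous_const
      obtain ⟨r, hr, hball⟩ := Metric.isOpen_iff.1 hopen x hx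
      have hconst : ∀ η ∈ Ioo (0:ℝ) (1/2), ∀ y ∈ Metric.ball x r,
          Ψ η (1 - η) y = Ψ η (1 - η) x := by
        intro η hη y hy
        have hd : ∀ z ∈ Metric.ball x r, HasDerivAt (Ψ η (1 - η)) 0 z := by
          intro z hz
          have := ((hKd (1 - η) z).sub (hKd η z)).sub
            (good_deriv g hg U hUo hU c q _ _ z (hc z) (hq z) η (1 - η)
              (by linarith [hη.2]) (fun s hs => hin z (hball hz) s
                ⟨by linarith [hη.1, hs.1], by linarith [hη.1, hs.2]⟩))
          refine this.congr_deriv ?_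
          ring
        exact Metric.isOpen_ball.is_const_of_deriv_eq_zero (convex_ball x r).isPreconnected
          (fun z hz => (hd z hz).differentiableAt.differentiableWithinAt)
          (fun z hz => (hd z hz).deriv) hy (Metric.mem_ball_self hr)
      have hlim : ∀ y ∈ Metric.ball x r, Ψ 0 1 y = Ψ 0 1 x := by
        intro y hy
        have t1 := ((hΨc y).tendsto 0).mono_left (nhdsWithin_le_nhds (s := Ioi 0))
        have t2 := ((hΨc x).tendsto 0).mono_left (nhdsWithin_le_nhds (s := Ioi 0))
        simp only [sub_zero] at t1 t2
        refine tendsto_nhds_unique_of_eventuallyEq t1 t2 ?_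
        filter_upwards [Ioo_mem_nhdsGT (show (0:ℝ) < 1/2 by norm_num)] with η hη
        exact hconst η hη y hy
      refine (hasDerivAt_const x (Ψ 0 1 x)).congr_of_eventuallyEq ?_
      filter_upwards [Metric.ball_mem_nhds x hr] with y hy using hlim y hy
  have hfin : Ψ 0 1 b = Ψ 0 1 a :=
    is_const_of_deriv_eq_zero (fun x => (hΨd x).differentiableAt) (fun x => (hΨd x).deriv) _ _
  have e1 : V 0 1 b = V 0 1 a := by simp only [hV, hca, hqa]
  have e2 : ∀ s, K s a = 0 := fun s => by simp [hK]
  simp only [hΨ, e1, e2] at hfin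
  have h3 : K 1 b = K 0 b := by linear_combination hfin
  simpa [hK] using h3

lemma impl_lem (f : (ℝ × ℝ) × ℝ → ℝ) (hf : ContDiff ℝ 1 f) (T : Set (ℝ × ℝ)) (hT : IsOpen T)
    (ε : ℝ) (hε : 0 < ε) (f' : (ℝ × ℝ) × ℝ → ℝ)
    (hd : ∀ p u, HasDerivAt (fun u => f (p, u)) (f' (p, u)) u)
    (hpos : ∀ p ∈ T, ∀ u ∈ Icc (-ε) ε, 0 < f' (p, u))
    (hl : ∀ p ∈ T, f (p, -ε) < 0) (hr : ∀ p ∈ T, 0 < f (p, ε)) :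
    ∃ υ : ℝ × ℝ → ℝ, (∀ p ∈ T, υ p ∈ Ioo (-ε) ε ∧ f (p, υ p) = 0 ∧
      ∀ u ∈ Icc (-ε) ε, f (p, u) = 0 → u = υ p) ∧ ∀ p ∈ T, ContDiffAt ℝ 1 υ p := by
  have hmono : ∀ p ∈ T, StrictMonoOn (fun u => f (p, u)) (Icc (-ε) ε) := by
    intro p hp
    refine strictMonoOn_of_deriv_pos (convex_Icc _ _)
      (fun u _ => (hd p u).continuousAt.continuousWithinAt) ?_
    intro u hu
    rw [(hd p u).deriv]
    exact hpos p hp u (interior_subset hu)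
  have hex : ∀ p, ∃ u, p ∈ T → u ∈ Ioo (-ε) ε ∧ f (p, u) = 0 := by
    intro p
    by_cases hp : p ∈ T
    · have := intermediate_value_Ioo (by linarith : -ε ≤ ε) (f := fun u => f (p, u))
        (fun u _ => (hd p u).continuousAt.continuousWithinAt)
      obtain ⟨u, hu, h0⟩ := this ⟨hl p hp, hr p hp⟩
      exact ⟨u, fun _ => ⟨hu, h0⟩⟩
    · exact ⟨0, fun h => absurd h hp⟩
  choose υ hυ using hex
  have huniq : ∀ p ∈ T, ∀ u ∈ Icc (-ε) ε, f (p, u) = 0 → u = υ p := by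
    intro p hp u hu h0
    exact (hmono p hp).injOn hu (Ioo_subset_Icc_self (hυ p hp).1) (h0.trans (hυ p hp).2.symm)
  refine ⟨υ, fun p hp => ⟨(hυ p hp).1, (hυ p hp).2, huniq p hp⟩, ?_⟩
  intro p hp
  have cdf : ContDiffAt ℝ 1 f (p, υ p) := hf.contDiffAt
  have hfd : HasFDerivAt f (fderiv ℝ f (p, υ p)) (p, υ p) :=
    (cdf.differentiableAt (by norm_num)).hasFDerivAt
  have hval : fderiv ℝ f (p, υ p) (0, 1) = f' (p, υ p) := by
    have h1 : HasDerivAt (fun u : ℝ => (p, u)) ((0 : ℝ × ℝ), (1:ℝ)) (υ p) :=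
      (hasDerivAt_const _ _).prodMk (hasDerivAt_id _)
    exact (hfd.comp_hasDerivAt (υ p) h1).unique (hd p (υ p))
  have hne : f' (p, υ p) ≠ 0 := (hpos p hp _ (Ioo_subset_Icc_self (hυ p hp).1)).ne'
  have hinv : (fderiv ℝ f (p, υ p) ∘L .inr ℝ (ℝ × ℝ) ℝ).IsInvertible := by
    refine ⟨ContinuousLinearEquiv.unitsEquivAut ℝ (Units.mk0 _ hne), ?_⟩
    ext
    simp [hval]
  have hψ := cdf.contDiffAt_implicitFunction (by norm_num) hinv
  refine hψ.congr_of_eventuallyEq ?_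
  have h1 := cdf.eventually_apply_implicitFunction (by norm_num) hinv
  have h2 := cdf.implicitFunction_apply_self (by norm_num) hinv
  have h3 := hψ.continuousAt.eventually_mem
    (s := Ioo (-ε) ε) (by rw [h2]; exact Ioo_mem_nhds (hυ p hp).1.1 (hυ p hp).1.2)
  simp only [(hυ p hp).2] at h1
  filter_upwards [h1, h3, hT.mem_nhds hp] with z hz1 hz3 hz
  exact (huniq z hz _ (Ioo_subset_Icc_self hz3) hz1).symm

lemma tube_lem {X : Type*} [TopologicalSpace X] (P : X → ℝ → Prop) (z₀ : X)
    (ho : IsOpen {w : X × ℝ | P w.1 w.2}) (hper : ∀ z x, P z (x + 2 * π) = P z x)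
    (h0 : ∀ x, P z₀ x) : ∀ᶠ z in 𝓝 z₀, ∀ x, P z x := by
  have h1 : ∀ᶠ z in 𝓝 z₀, ∀ x ∈ Icc 0 (2 * π), P z x :=
    isCompact_Icc.eventually_forall_of_forall_eventually fun x _ => ho.mem_nhds (h0 x)
  filter_upwards [h1] with z hz x
  obtain ⟨y, hy, hxy⟩ := Function.Periodic.exists_mem_Ico₀ (f := P z) (hper z) Real.two_pi_pos x
  rw [hxy]
  exact hz y (Ico_subset_Icc_self hy)

lemma interior_lem (c a a' : ℝ → ℂ) (S : Set ℂ) (Y : ℝ → ℝ) (x s : ℝ)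
    (hs : s ∈ Ioo (0:ℝ) 1)
    (hc : HasStrictDerivAt c (a x) x) (ha : HasStrictDerivAt a (a' x) x)
    (hY : ContinuousAt Y x) (hY0 : Y x ≠ 0)
    (hb : ‖a' x‖ * ‖(Y x : ℂ) * I * a x‖ < ‖a x‖ ^ 2)
    (hmem : ∀ x, ∀ y ∈ uIcc 0 (Y x), c x + y * I * a x ∈ S) :
    c x + s * ((Y x : ℂ) * I * a x) ∈ interior S := by
  rw [mem_interior_iff_mem_nhds]
  set M : ℝ × ℝ → ℂ := fun z => c z.1 + z.2 * I * a z.1 with hM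
  have ha0 : a x ≠ 0 := by
    intro h0
    simp [h0] at hb
  set z₀ : ℝ × ℝ := (x, s * Y x) with hz₀
  have hMz : c x + s * ((Y x : ℂ) * I * a x) = M z₀ := by
    simp only [hM, hz₀]
    push_cast
    ring
  have hfst : HasStrictFDerivAt (fun z : ℝ × ℝ => z.1) (ContinuousLinearMap.fst ℝ ℝ ℝ) z₀ :=
    hasStrictFDerivAt_fst
  have d1 : HasStrictFDerivAt (fun z : ℝ × ℝ => c z.1) _ z₀ :=
    HasStrictFDerivAt.comp z₀ (g := c) hc.hasStrictFDerivAt hfst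
  have d2 : HasStrictFDerivAt (fun z : ℝ × ℝ => a z.1) _ z₀ :=
    HasStrictFDerivAt.comp z₀ (g := a) ha.hasStrictFDerivAt hfst
  have d3 : HasStrictFDerivAt (fun z : ℝ × ℝ => (z.2 : ℂ) * I) _ z₀ :=
    (Complex.ofRealCLM.comp (ContinuousLinearMap.snd ℝ ℝ ℝ)).hasStrictFDerivAt.mul_const I
  have d := d1.add (d3.mul d2)
  have hmap := d.map_nhds_eq_of_surj (by
    rw [LinearMap.range_eq_top]
    intro w
    set κ : ℝ := 1 + ((s * Y x : ℂ) * I * a' x / a x).re with hκ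
    have hκ0 : κ ≠ 0 := by
      have hn : 0 < ‖a x‖ := norm_pos_iff.2 ha0
      have h1 : ‖(s * Y x : ℂ) * I * a' x / a x‖ < 1 := by
        rw [norm_div, div_lt_one hn]
        simp only [norm_mul, Complex.norm_I, mul_one, Complex.norm_real] at hb ⊢
        have h2 : ‖a' x‖ * ‖Y x‖ < ‖a x‖ := by
          by_contra! hcon
          nlinarith
        have h3 : ‖s‖ ≤ 1 := by
          rw [Real.norm_eq_abs, abs_le]; constructor <;> linarith [hs.1, hs.2]
        nlinarith [mul_nonneg (norm_nonneg (a' x)) (norm_nonneg (Y x)), norm_nonneg s]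
      have h2 := abs_lt.1 ((Complex.abs_re_le_norm _).trans_lt h1)
      intro h3
      linarith [h2.1]
    set v₁ : ℝ := (w / a x).re / κ with hv₁
    set v₂ : ℝ := (w / a x).im - v₁ * ((s * Y x : ℂ) * I * a' x / a x).im with hv₂
    refine ⟨(v₁, v₂), ?_⟩
    have key : (v₁ : ℂ) * (1 + (s * Y x : ℂ) * I * a' x / a x) + v₂ * I = w / a x := by
      apply Complex.ext
      · have : v₁ * κ = (w / a x).re := by rw [hv₁]; field_simp
        rw [← this, hκ]
        simp
      · have : v₂ + v₁ * ((s * Y x : ℂ) * I * a' x / a x).im = (w / a x).im := by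
          rw [hv₂]; ring
        rw [← this]
        simp
        ring
    have key2 : (v₁ : ℂ) * (a x + (s * Y x : ℂ) * I * a' x) + v₂ * I * a x = w := by
      field_simp at key
      linear_combination key
    rw [← key2]
    simp [hz₀]
    ring)
  have hev : ∀ᶠ z in 𝓝 z₀, M z ∈ S := by
    have hcont : ContinuousAt (fun z : ℝ × ℝ => z.2 * (Y z.1 - z.2)) z₀ := by
      have : ContinuousAt (fun z : ℝ × ℝ => Y z.1) z₀ :=
        ContinuousAt.comp (f := fun z : ℝ × ℝ => z.1) (g := Y) hY continuousAt_fst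
      exact continuousAt_snd.mul (this.sub continuousAt_snd)
    have hp : 0 < z₀.2 * (Y z₀.1 - z₀.2) := by
      have : z₀.2 * (Y z₀.1 - z₀.2) = s * (1 - s) * Y x ^ 2 := by simp only [hz₀]; ring
      rw [this]
      have := hs.1
      have : 0 < 1 - s := by linarith [hs.2]
      positivity
    filter_upwards [hcont.eventually (lt_mem_nhds hp)] with z hz
    refine hmem _ _ (mem_uIcc.2 ?_)
    rcases pos_and_pos_or_neg_and_neg_of_mul_pos hz with h | h
    · left; constructor <;> linarith [h.1, h.2]
    · right; constructor <;> linarith [h.1, h.2]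
  rw [hMz]
  have : S ∈ map M (𝓝 z₀) := hev
  have hmap' : map M (𝓝 z₀) = 𝓝 (M z₀) := hmap
  rwa [hmap'] at this

lemma geom_lem (h : ℝ × ℝ → ℂ) (hsm : ContDiff ℝ (⊤ : ℕ∞) h)
    (hper : ∀ θ t, h (θ + 2 * π, t) = h (θ, t)) (D : ℝ × ℝ → ℂ) (hD : ContDiff ℝ (⊤ : ℕ∞) D)
    (hDd : ∀ θ t, HasDerivAt (fun x => h (x, t)) (D (θ, t)) θ)
    (t₀ : ℝ) (hne : ∀ θ, D (θ, t₀) ≠ 0) :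
    ∃ δ > 0, ∀ t, |t - t₀| < δ → ∃ ϑ : ℝ → ℝ, ContDiff ℝ 1 ϑ ∧
      (∀ x, ϑ (x + 2 * π) = ϑ x + 2 * π) ∧
      ∀ x, h (ϑ x, t) - h (x, t₀) ≠ 0 → ∀ s ∈ Ioo (0:ℝ) 1,
        h (x, t₀) + s * (h (ϑ x, t) - h (x, t₀)) ∈ interior (h '' (univ ×ˢ uIcc t₀ t)) := by
  have hDper : ∀ θ t, D (θ + 2 * π, t) = D (θ, t) := by
    intro θ t
    have h1 := (hDd (θ + 2 * π) t).comp_add_const θ (2 * π)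
    have h2 : (fun x => h (x + 2 * π, t)) = fun x => h (x, t) := funext fun x => hper x t
    rw [h2] at h1
    exact h1.unique (hDd θ t)
  set a : ℝ → ℂ := fun x => D (x, t₀) with ha
  have hac : ContDiff ℝ (⊤ : ℕ∞) a := by fun_prop
  have hcc : ContDiff ℝ (⊤ : ℕ∞) (fun x => h (x, t₀)) := by fun_prop
  have hacont : Continuous a := hac.continuous
  have hhcont : Continuous h := hsm.continuous
  have hDcont : Continuous D := hD.continuous
  have ha'cont : Continuous (deriv a) := hac.continuous_deriv (by simp)
  have haper : ∀ x, a (x + 2 * π) = a x := fun x => hDper x t₀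
  have ha'per : ∀ x, deriv a (x + 2 * π) = deriv a x := by
    intro x
    rw [← deriv_comp_add_const a (2 * π) x]
    congr 1
    exact funext haper
  have hpos0 : ∀ x, 0 < ‖a x‖ ^ 2 := fun x => by
    have := norm_pos_iff.2 (hne x)
    positivity
  -- first uniform neighbourhood
  set P : ℝ × ℝ → ℝ → Prop := fun z x =>
    0 < (D (x + z.1, z.2) * (starRingEnd ℂ) (a x)).re ∧
    ‖deriv a x‖ * ‖h (x + z.1, z.2) - h (x, t₀)‖ < ‖a x‖ ^ 2 with hP
  have hPev : ∀ᶠ z in 𝓝 ((0, t₀) : ℝ × ℝ), ∀ x, P z x := by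
    refine tube_lem P _ ?_ ?_ ?_
    · refine IsOpen.and ?_ ?_
      · exact isOpen_lt continuous_const (by fun_prop)
      · exact isOpen_lt (by fun_prop) (by fun_prop)
    · intro z x
      have e : x + 2 * π + z.1 = x + z.1 + 2 * π := by ring
      simp only [hP, e, hDper, hper, haper, ha'per]
    · intro x
      refine ⟨?_, ?_⟩
      · have : (D (x + 0, t₀) * (starRingEnd ℂ) (a x)) = ((‖a x‖ ^ 2 : ℝ) : ℂ) := by
          rw [add_zero]
          push_cast
          exact Complex.mul_conj' (a x)
        show 0 < (D (x + 0, t₀) * (starRingEnd ℂ) (a x)).re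
        rw [this, Complex.ofReal_re]
        exact hpos0 x
      · simpa using hpos0 x
  obtain ⟨ε₀, hε₀, hball⟩ := Metric.eventually_nhds_iff.1 hPev
  set ε := ε₀ / 2 with hε
  have hεpos : 0 < ε := by positivity
  have hP' : ∀ u ∈ Icc (-ε) ε, ∀ τ, |τ - t₀| ≤ ε → ∀ x, P (u, τ) x := by
    intro u hu τ hτ
    apply hball
    rw [Prod.dist_eq, max_lt_iff]
    constructor
    · rw [Real.dist_eq]
      have : |u - 0| ≤ ε := by rw [sub_zero]; exact abs_le.2 hu
      dsimp only
      linarith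
    · rw [Real.dist_eq]
      dsimp only
      linarith
  set f : (ℝ × ℝ) × ℝ → ℝ := fun w =>
    ((h (w.1.1 + w.2, w.1.2) - h (w.1.1, t₀)) * (starRingEnd ℂ) (a w.1.1)).re with hf
  set f' : (ℝ × ℝ) × ℝ → ℝ := fun w =>
    (D (w.1.1 + w.2, w.1.2) * (starRingEnd ℂ) (a w.1.1)).re with hf'
  have hfc : ContDiff ℝ 1 f := by
    have h1 : ContDiff ℝ 1 (fun w : (ℝ × ℝ) × ℝ =>
        (h (w.1.1 + w.2, w.1.2) - h (w.1.1, t₀)) * Complex.conjCLE (a w.1.1)) := by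
      have e1 : ContDiff ℝ 1 h := hsm.of_le (by exact_mod_cast le_top)
      have e2 : ContDiff ℝ 1 a := hac.of_le (by exact_mod_cast le_top)
      have e3 : ContDiff ℝ 1 (fun w : (ℝ × ℝ) × ℝ => Complex.conjCLE (a w.1.1)) :=
        Complex.conjCLE.contDiff.comp (e2.comp (by fun_prop))
      refine ContDiff.mul (ContDiff.sub (e1.comp (by fun_prop)) (e1.comp (by fun_prop))) e3
    exact Complex.reCLM.contDiff.comp h1
  have hfd : ∀ p u, HasDerivAt (fun u => f (p, u)) (f' (p, u)) u := by
    intro p u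
    have h1 := (hDd (p.1 + u) p.2).comp_const_add p.1 u
    have h2 := (h1.sub_const (h (p.1, t₀))).mul_const ((starRingEnd ℂ) (a p.1))
    exact Complex.reCLM.hasFDerivAt.comp_hasDerivAt u h2
  have hmono : ∀ x, StrictMonoOn (fun u => f ((x, t₀), u)) (Icc (-ε) ε) := by
    intro x
    refine strictMonoOn_of_deriv_pos (convex_Icc _ _)
      (fun u _ => (hfd _ u).continuousAt.continuousWithinAt) ?_
    intro u hu
    rw [(hfd _ u).deriv]
    exact (hP' u (interior_subset hu) t₀ (by simpa using hεpos.le) x).1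
  have hf0 : ∀ x, f ((x, t₀), 0) = 0 := fun x => by simp [hf]
  set P₂ : ℝ → ℝ → Prop := fun τ x => f ((x, τ), -ε) < 0 ∧ 0 < f ((x, τ), ε) with hP₂
  have hP₂ev : ∀ᶠ τ in 𝓝 t₀, ∀ x, P₂ τ x := by
    have hfcont := hfc.continuous
    refine tube_lem P₂ _ ?_ ?_ ?_
    · refine IsOpen.and ?_ ?_
      · exact isOpen_lt (by fun_prop) (by fun_prop)
      · exact isOpen_lt (by fun_prop) (by fun_prop)
    · intro τ x
      have e : ∀ u, x + 2 * π + u = x + u + 2 * π := fun u => by ring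
      simp only [hP₂, hf, e, hper, haper]
    · intro x
      have m0 : (0:ℝ) ∈ Icc (-ε) ε := ⟨by linarith, hεpos.le⟩
      have m1 : -ε ∈ Icc (-ε) ε := ⟨le_rfl, by linarith⟩
      have m2 : ε ∈ Icc (-ε) ε := ⟨by linarith, le_rfl⟩
      have h1 := hmono x m1 m0 (by linarith)
      have h2 := hmono x m0 m2 (by linarith)
      simp only [hf0] at h1 h2
      exact ⟨h1, h2⟩
  obtain ⟨δ₀, hδ₀, hball₂⟩ := Metric.eventually_nhds_iff.1 hP₂ev
  set δ := min δ₀ ε with hδ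
  have hδpos : 0 < δ := lt_min hδ₀ hεpos
  set T : Set (ℝ × ℝ) := {p | |p.2 - t₀| < δ} with hT
  have hTo : IsOpen T := isOpen_lt (by fun_prop) continuous_const
  have hTε : ∀ p ∈ T, |p.2 - t₀| ≤ ε := fun p hp => (lt_of_lt_of_le hp (min_le_right _ _)).le
  have hT₂ : ∀ p ∈ T, P₂ p.2 p.1 := fun p hp =>
    hball₂ (by rw [Real.dist_eq]; exact lt_of_lt_of_le hp (min_le_left _ _)) p.1
  obtain ⟨υ, hυ, hυc⟩ := impl_lem f hfc T hTo ε hεpos f' hfd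
    (fun p hp u hu => (hP' u hu p.2 (hTε p hp) p.1).1)
    (fun p hp => (hT₂ p hp).1) (fun p hp => (hT₂ p hp).2)
  have hυ0 : ∀ x, υ (x, t₀) = 0 := by
    intro x
    have hmem : (x, t₀) ∈ T := by simpa [hT] using hδpos
    exact ((hυ _ hmem).2.2 0 ⟨by linarith, hεpos.le⟩ (hf0 x)).symm
  set y : ℝ × ℝ → ℝ := fun p =>
    ((h (p.1 + υ p, p.2) - h (p.1, t₀)) * (starRingEnd ℂ) (a p.1)).im / ‖a p.1‖ ^ 2 with hy
  have hyeq : ∀ p ∈ T, h (p.1 + υ p, p.2) - h (p.1, t₀) = y p * I * a p.1 := by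
    intro p hp
    have hre : ((h (p.1 + υ p, p.2) - h (p.1, t₀)) * (starRingEnd ℂ) (a p.1)).re = 0 :=
      (hυ p hp).2.1
    have hn : (starRingEnd ℂ) (a p.1) ≠ 0 := by simpa using hne p.1
    apply mul_right_cancel₀ hn
    have e : (y p : ℂ) * I * a p.1 * (starRingEnd ℂ) (a p.1) = y p * I * (‖a p.1‖ ^ 2 : ℝ) := by
      rw [mul_assoc, Complex.mul_conj']
      push_cast
      ring
    rw [e]
    apply Complex.ext
    · rw [hre]; simp [-Complex.ofReal_pow]
    · have : y p * ‖a p.1‖ ^ 2 =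
          ((h (p.1 + υ p, p.2) - h (p.1, t₀)) * (starRingEnd ℂ) (a p.1)).im := by
        simp only [hy]
        exact div_mul_cancel₀ _ (hpos0 p.1).ne'
      rw [← this]
      simp [-Complex.ofReal_pow]
  have hycont : ∀ p ∈ T, ContinuousAt y p := by
    intro p hp
    have h1 : ContinuousAt υ p := (hυc p hp).continuousAt
    have h2 : ContinuousAt (fun p : ℝ × ℝ => h (p.1 + υ p, p.2)) p :=
      ContinuousAt.comp (g := h) hhcont.continuousAt
        ((continuousAt_fst.add h1).prodMk continuousAt_snd)
    have h3 : ContinuousAt (fun p : ℝ × ℝ => h (p.1, t₀)) p := by fun_prop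
    have h4 : ContinuousAt (fun p : ℝ × ℝ => (starRingEnd ℂ) (a p.1)) p := by fun_prop
    have h5 : ContinuousAt (fun p : ℝ × ℝ => ‖a p.1‖ ^ 2) p := by fun_prop
    exact (Complex.continuous_im.continuousAt.comp ((h2.sub h3).mul h4)).div h5 (hpos0 p.1).ne'
  refine ⟨δ, hδpos, fun t ht => ⟨fun x => x + υ (x, t), ?_, ?_, ?_⟩⟩
  · rw [contDiff_iff_contDiffAt]
    intro x
    have h1 : ContDiffAt ℝ 1 υ (x, t) := hυc (x, t) ht
    have h2 : ContDiffAt ℝ 1 (fun x : ℝ => (x, t)) x := by fun_prop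
    exact contDiffAt_id.add (h1.comp x h2)
  · intro x
    have h1 := hυ (x, t) ht
    have h2 := hυ (x + 2 * π, t) ht
    have : υ (x, t) = υ (x + 2 * π, t) := by
      refine h2.2.2 _ (Ioo_subset_Icc_self h1.1) ?_
      have e : x + 2 * π + υ (x, t) = x + υ (x, t) + 2 * π := by ring
      have h3 := h1.2.1
      simp only [hf] at h3 ⊢
      rw [e, hper, hper, haper]
      exact h3
    dsimp only
    rw [← this]
    ring
  · intro x hx s hs
    have hxT : ∀ x, (x, t) ∈ T := fun x => ht
    have hsubT : ∀ x, ∀ τ ∈ uIcc t₀ t, (x, τ) ∈ T := by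
      intro x τ hτ
      have : |τ - t₀| ≤ |t - t₀| := by
        exact abs_sub_left_of_mem_uIcc hτ
      exact lt_of_le_of_lt this ht
    have hyx := hyeq (x, t) ht
    dsimp only at hyx
    rw [hyx] at hx ⊢
    refine interior_lem (fun x => h (x, t₀)) a (deriv a) _ (fun x => y (x, t)) x s hs ?_ ?_ ?_ ?_ ?_ ?_
    · have := (hcc.contDiffAt (x := x)).hasStrictDerivAt (by simp)
      rwa [(hDd x t₀).deriv] at this
    · exact (hac.contDiffAt (x := x)).hasStrictDerivAt (by simp)
    · exact ContinuousAt.comp (f := fun x : ℝ => (x, t)) (g := y) (hycont (x, t) ht) (by fun_prop)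
    · intro h0
      apply hx
      simp [h0]
    · have := (hP' (υ (x, t)) (Ioo_subset_Icc_self (hυ (x, t) ht).1) t (hTε (x, t) ht) x).2
      dsimp only at this ⊢
      rwa [hyx] at this
    · intro x' y' hy'
      have hc : ContinuousOn (fun τ => y (x', τ)) (uIcc t₀ t) := fun τ hτ =>
        (ContinuousAt.comp (f := fun τ : ℝ => (x', τ)) (g := y)
          (hycont (x', τ) (hsubT x' τ hτ)) (by fun_prop)).continuousWithinAt
      have hy0 : y (x', t₀) = 0 := by simp [hy, hυ0]
      have hivt := intermediate_value_uIcc hc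
      simp only [hy0] at hivt
      obtain ⟨τ, hτ, rfl⟩ := hivt hy'
      refine ⟨(x' + υ (x', τ), τ), ⟨mem_univ _, hτ⟩, ?_⟩
      have := hyeq (x', τ) (hsubT x' τ hτ)
      dsimp only at this ⊢
      rw [← this]
      ring

open Set Complex Real

theorem cauchy_theorem_for_annuli_with_thin_parts
    (h : ℝ × ℝ → ℂ)
    (hsm : ContDiff ℝ (⊤ : ℕ∞) h)
    (hper : ∀ θ t, h (θ + 2 * π, t) = h (θ, t))
    (hinj : ∀ t ∈ Icc (0:ℝ) 1, InjOn (fun θ => h (θ, t)) (Ico 0 (2 * π)))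
    (hderiv : ∀ θ : ℝ, ∀ t ∈ Icc (0:ℝ) 1, deriv (fun x => h (x, t)) θ ≠ 0)
    (hinward : ∀ θ : ℝ, ∀ t ∈ Icc (0:ℝ) 1,
      (deriv (fun s => h (θ, s)) t / deriv (fun x => h (x, t)) θ).im ≤ 0)
    (A : Set ℂ) (hA : A = h '' (univ ×ˢ Icc (0:ℝ) 1))
    (hfront : frontier A ⊆ (range fun θ => h (θ, 0)) ∪ (range fun θ => h (θ, 1)))
    (g : ℂ → ℂ)
    (hg_cont : ContinuousOn g A)
    (hg_holo : DifferentiableOn ℂ g (interior A))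
    (hg_in : ContDiff ℝ (⊤ : ℕ∞) (fun θ : ℝ => g (h (θ, 0))))
    (hg_out : ContDiff ℝ (⊤ : ℕ∞) (fun θ : ℝ => g (h (θ, 1)))) :
    ∫ θ in (0:ℝ)..(2 * π), g (h (θ, 0)) * deriv (fun x => h (x, 0)) θ =
      ∫ θ in (0:ℝ)..(2 * π), g (h (θ, 1)) * deriv (fun x => h (x, 1)) θ := by
  have hhcont : Continuous h := hsm.continuous
  -- the partial derivative
  set D : ℝ × ℝ → ℂ := fun p => fderiv ℝ h p (1, 0) with hDdef
  have hD : ContDiff ℝ (⊤ : ℕ∞) D :=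
    (hsm.fderiv_right (m := ((⊤ : ℕ∞) : WithTop ℕ∞)) (by simp)).clm_apply contDiff_const
  have hDcont : Continuous D := hD.continuous
  have hDd : ∀ θ t, HasDerivAt (fun x => h (x, t)) (D (θ, t)) θ := by
    intro θ t
    have h1 : HasFDerivAt h (fderiv ℝ h (θ, t)) (θ, t) :=
      (hsm.differentiable (by simp) _).hasFDerivAt
    have h2 : HasDerivAt (fun x : ℝ => (x, t)) ((1:ℝ), (0:ℝ)) θ :=
      (hasDerivAt_id θ).prodMk (hasDerivAt_const θ t)
    exact h1.comp_hasDerivAt θ h2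
  have hDe : ∀ θ t, deriv (fun x => h (x, t)) θ = D (θ, t) := fun θ t => (hDd θ t).deriv
  have hDper : ∀ θ t, D (θ + 2 * π, t) = D (θ, t) := by
    intro θ t
    have h1 := (hDd (θ + 2 * π) t).comp_add_const θ (2 * π)
    have h2 : (fun x => h (x + 2 * π, t)) = fun x => h (x, t) := funext fun x => hper x t
    rw [h2] at h1
    exact h1.unique (hDd θ t)
  -- `A` is compact, extend `g`
  have hAc : IsCompact A := by
    have : A = h '' (Icc 0 (2 * π) ×ˢ Icc (0:ℝ) 1) := by
      rw [hA]
      apply Subset.antisymm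
      · rintro _ ⟨⟨x, t⟩, ⟨-, ht⟩, rfl⟩
        obtain ⟨x', hx', he⟩ := Function.Periodic.exists_mem_Ico₀
          (f := fun x => h (x, t)) (fun x => hper x t) Real.two_pi_pos x
        exact ⟨(x', t), ⟨Ico_subset_Icc_self hx', ht⟩, he.symm⟩
      · exact image_mono (prod_mono (subset_univ _) le_rfl)
    rw [this]
    exact (isCompact_Icc.prod isCompact_Icc).image hhcont
  obtain ⟨G, hG⟩ := ContinuousMap.exists_restrict_eq hAc.isClosed
    (⟨A.domRestrict g, hg_cont.domRestrict⟩ : C(A, ℂ))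
  have hGg : ∀ z ∈ A, G z = g z := fun z hz => by
    have := DFunLike.congr_fun hG ⟨z, hz⟩
    exact this
  have hGd : DifferentiableOn ℂ G (interior A) :=
    hg_holo.congr fun z hz => hGg z (interior_subset hz)
  have hmemA : ∀ θ, ∀ t ∈ Icc (0:ℝ) 1, h (θ, t) ∈ A := fun θ t ht => by
    rw [hA]; exact ⟨(θ, t), ⟨mem_univ _, ht⟩, rfl⟩
  set F : ℝ → ℂ := fun t => ∫ θ in (0:ℝ)..(2 * π), G (h (θ, t)) * D (θ, t) with hF
  have hloc : ∀ t₀ ∈ Icc (0:ℝ) 1, ∃ δ > 0, ∀ t ∈ Icc (0:ℝ) 1, |t - t₀| < δ → F t = F t₀ := by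
    intro t₀ ht₀
    obtain ⟨δ, hδ, hgeo⟩ := geom_lem h hsm hper D hD hDd t₀
      (fun θ => by rw [← hDe]; exact hderiv θ t₀ ht₀)
    refine ⟨δ, hδ, fun t ht htt => ?_⟩
    obtain ⟨ϑ, hϑ, hϑper, hint⟩ := hgeo t htt
    have hϑd : ∀ x, HasDerivAt ϑ (deriv ϑ x) x := fun x =>
      (hϑ.differentiable (by norm_num) x).hasDerivAt
    have hϑ'c : Continuous (deriv ϑ) := hϑ.continuous_deriv (by norm_num)
    have hϑc : Continuous ϑ := hϑ.continuous
    have hsub : h '' (univ ×ˢ uIcc t₀ t) ⊆ A := by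
      rw [hA]
      exact image_mono (prod_mono le_rfl (uIcc_subset_Icc ht₀ ht))
    have hϑ2 : ϑ (2 * π) = ϑ 0 + 2 * π := by simpa using hϑper 0
    have key := lemM G G.continuous (interior A) isOpen_interior hGd
      (fun x => h (x, t₀)) (fun x => h (ϑ x, t)) (fun x => D (x, t₀))
      (fun x => deriv ϑ x • D (ϑ x, t)) (fun x => hDd x t₀)
      (fun x => (hDd (ϑ x) t).scomp x (hϑd x)) (by fun_prop) (by fun_prop)
      (fun x hx s hs => interior_mono hsub (hint x hx s hs)) 0 (2 * π)
      (by simpa using (hper 0 t₀).symm) (by simp only [hϑ2, hper])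
    have hsubst := intervalIntegral.integral_deriv_smul_comp (a := 0) (b := 2 * π) (f := ϑ)
      (f' := deriv ϑ) (g := fun θ => G (h (θ, t)) * D (θ, t)) (fun x _ => hϑd x)
      hϑ'c.continuousOn (by fun_prop)
    have hperint : ∫ θ in (ϑ 0)..(ϑ 0 + 2 * π), G (h (θ, t)) * D (θ, t) = F t := by
      have hp : Function.Periodic (fun θ => G (h (θ, t)) * D (θ, t)) (2 * π) := fun θ => by
        simp only [hper, hDper]
      simpa [hF] using hp.intervalIntegral_add_eq (ϑ 0) 0
    rw [hϑ2, hperint] at hsubst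
    rw [← hsubst]
    simp only [hF, ← key]
    refine intervalIntegral.integral_congr fun x _ => ?_
    simp only [Function.comp, Complex.real_smul]
    ring
  have hFeq : F 0 = F 1 := by
    have hlc : IsLocallyConstant (fun t : Icc (0:ℝ) 1 => F t) := by
      rw [IsLocallyConstant.iff_eventually_eq]
      intro t₀
      obtain ⟨δ, hδ, hh⟩ := hloc t₀ t₀.2
      filter_upwards [Metric.ball_mem_nhds t₀ hδ] with t ht
      exact hh t t.2 (by simpa [Subtype.dist_eq, Real.dist_eq] using ht)
    have : PreconnectedSpace (Icc (0:ℝ) 1) := Subtype.preconnectedSpace isPreconnected_Icc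
    exact hlc.apply_eq_of_preconnectedSpace ⟨0, by simp⟩ ⟨1, by simp⟩
  have hfin : ∀ t ∈ Icc (0:ℝ) 1,
      ∫ θ in (0:ℝ)..(2 * π), g (h (θ, t)) * deriv (fun x => h (x, t)) θ = F t := by
    intro t ht
    refine intervalIntegral.integral_congr fun x _ => ?_
    simp only [hDe, hGg _ (hmemA x t ht)]
  rw [hfin 0 (by simp), hfin 1 (by simp), hFeq]
end
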